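/- arXiv:math/0302037 — 2 statements merged into one kernel-verified Lean document; each statement's English description precedes it below -/
import Mathlib

section
/- For all x, y ∈ W_n: B_n(x) = B_n(y) if and only if x ↔_L y. -/
open scoped Classical

noncomputable section

/-! ## The hyperoctahedral group `W_n` as signed permutations of `I_n ⊆ ℤ` -/

abbrev P := Equiv.Perm ℤ

/-- `W_n` : permutations of `I_n = {±1, …, ±n}` commuting with `i ↦ -i`,
realized as permutations of `ℤ` fixing everything outside `I_n`. -/
def Wset (n : ℕ) : Set P :=
  {π | (∀ i : ℤ, π (-i) = - π i) ∧ ∀ i : ℤ, (n : ℤ) < |i| → π i = i}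

/-- the generator `t = (1, -1)` -/
def tgen : P := Equiv.swap 1 (-1)

/-- the generator `s_i = (i, i+1)(-i, -(i+1))` -/
def sgen (i : ℕ) : P :=
  Equiv.swap (i : ℤ) ((i : ℤ) + 1) * Equiv.swap (-(i : ℤ)) (-((i : ℤ) + 1))

/-- the generating set `S_n = {t, s_1, …, s_{n-1}}` -/
def Sset (n : ℕ) : Set P := insert tgen (sgen '' Set.Icc 1 (n - 1))

/-- the length function of `W_n` with respect to `S_n` -/
def len (n : ℕ) (w : P) : ℕ :=
  sInf {k | ∃ l : List P, (∀ g ∈ l, g ∈ Sset n) ∧ l.prod = w ∧ l.length = k}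

/-- number of occurrences of `tgen` in a list -/
def tcount (l : List P) : ℕ := (l.map (fun g => if g = tgen then 1 else 0)).sum

/-- `ℓ_t(w)` : the number of occurrences of `t` in a (any) reduced expression of `w` -/
def tlen (n : ℕ) (w : P) : ℕ :=
  sInf {k | ∃ l : List P, (∀ g ∈ l, g ∈ Sset n) ∧ l.prod = w ∧
    l.length = len n w ∧ tcount l = k}

/-- the Bruhat order on `W_n` : `x ≤ y` iff some reduced expression of `y`
has a subword whose product is `x`. -/
def bruhat (n : ℕ) (x y : P) : Prop :=
  ∃ l l' : List P, (∀ g ∈ l, g ∈ Sset n) ∧ l.prod = y ∧ l.length = len n y ∧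
    List.Sublist l' l ∧ l'.prod = x

/-! ## Generalized Robinson–Schensted correspondence -/

abbrev Tab := List (List ℕ)

/-- row insertion of `x` into one row; returns the new row and the bumped entry (if any) -/
def insRow (x : ℕ) : List ℕ → List ℕ × Option ℕ
  | [] => ([x], none)
  | y :: ys =>
    if x < y then (x :: ys, some y)
    else
      let p := insRow x ys
      (y :: p.1, p.2)

/-- Schensted insertion of `x` into a tableau; returns the new tableau
and the (row, column) coordinates of the newly created box. -/
def insTab (x : ℕ) : Tab → Tab × ℕ × ℕ
  | [] => ([[x]], 0, 0)
  | row :: rest =>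
    let p := insRow x row
    match p.2 with
    | none => (p.1 :: rest, 0, row.length)
    | some b =>
      let q := insTab b rest
      (p.1 :: q.1, q.2.1 + 1, q.2.2)

/-- place the label `lbl` at the end of row `pos.1` of the recording tableau -/
def place (lbl : ℕ) (pos : ℕ × ℕ) (T : Tab) : Tab :=
  if pos.1 < T.length then T.set pos.1 ((T.getD pos.1 []) ++ [lbl]) else T ++ [[lbl]]

/-- one step of the generalized RS algorithm: insert `|π(i)|` into `A⁺` or `A⁻`
according to the sign of `π(i)`, and record `i` in the corresponding `B`-tableau. -/
def RSstep (π : P) (st : (Tab × Tab) × (Tab × Tab)) (i : ℕ) : (Tab × Tab) × (Tab × Tab) :=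
  let v := (π (i : ℤ)).natAbs
  if 0 < π (i : ℤ) then
    let p := insTab v st.1.1
    ((p.1, st.1.2), (place i p.2 st.2.1, st.2.2))
  else
    let p := insTab v st.1.2
    ((st.1.1, p.1), (st.2.1, place i p.2 st.2.2))

def RSfull (n : ℕ) (π : P) : (Tab × Tab) × (Tab × Tab) :=
  (((List.range n).map (· + 1)).foldl (RSstep π)) ((([], []), ([], [])))

/-- the insertion bitableau `A_n(π) = (A⁺, A⁻)` -/
def Atab (n : ℕ) (π : P) : Tab × Tab := (RSfull n π).1

/-- the recording bitableau `B_n(π) = (B⁺, B⁻)` -/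
def Btab (n : ℕ) (π : P) : Tab × Tab := (RSfull n π).2

/-- `T` is a standard Young tableau -/
def IsStdTab (T : Tab) : Prop :=
  (∀ row ∈ T, row ≠ [] ∧ row.Chain' (· < ·)) ∧
  T.Chain' (fun r1 r2 => r2.length ≤ r1.length) ∧
  ∀ i j : ℕ, i + 1 < T.length → j < (T.getD (i + 1) []).length →
    (T.getD i []).getD j 0 < (T.getD (i + 1) []).getD j 0

/-- `(T₁, T₂)` is an `n`-standard bitableau: both standard, entry sets disjoint
with union `{1, …, n}` -/
def IsNStdBitab (n : ℕ) (p : Tab × Tab) : Prop :=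
  IsStdTab p.1 ∧ IsStdTab p.2 ∧ (p.1.flatten ++ p.2.flatten).Perm (List.range' 1 n)

/-- the shape of a bitableau -/
def shape2 (p : Tab × Tab) : List ℕ × List ℕ := (p.1.map List.length, p.2.map List.length)

/-! ## Knuth relations -/

/-- `t_i = (i, -i)` -/
def ttgen (i : ℕ) : P := Equiv.swap (i : ℤ) (-(i : ℤ))

/-- `S'_n = S_n ∪ {t_1, …, t_n}` -/
def Sprime (n : ℕ) : Set P := Sset n ∪ (ttgen '' Set.Icc 1 n)

/-- the extended left descent set `L'(w)` -/
def Ldesc (n : ℕ) (w : P) : Set P := {u ∈ Sprime n | len n (u * w) < len n w}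

/-- the elementary relation `x —s→ y` -/
def knuthStep (n : ℕ) (x y : P) : Prop :=
  ∃ i ∈ Set.Icc 1 (n - 1), y = sgen i * x ∧ len n x < len n y ∧
    ¬ (Ldesc n x ⊆ Ldesc n y)

/-- the relation `x ↔_L y` -/
def knuthRel (n : ℕ) : P → P → Prop :=
  Relation.ReflTransGen (fun a b => knuthStep n a b ∨ knuthStep n b a)

/-! ## Parabolic subgroups, coset representatives and the decomposition -/

/-- the parabolic subgroup `𝔖_n = ⟨s_1, …, s_{n-1}⟩` -/
def SymN (n : ℕ) : Subgroup P := Subgroup.closure (sgen '' Set.Icc 1 (n - 1))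

/-- the parabolic subgroup `𝔖_{l, n-l} = ⟨{s_1, …, s_{n-1}} \ {s_l}⟩` -/
def SymLR (n l : ℕ) : Subgroup P :=
  Subgroup.closure (sgen '' {i | 1 ≤ i ∧ i ≤ n - 1 ∧ i ≠ l})

/-- `Y_{l, n-l}` : minimal length representatives of left cosets of `𝔖_{l,n-l}` in `𝔖_n` -/
def Yset (n l : ℕ) : Set P :=
  {w | w ∈ SymN n ∧ ∀ u ∈ SymLR n l, len n w ≤ len n (w * u)}

/-- `X_n` : minimal length representatives of the left cosets `w 𝔖_n` in `W_n` -/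
def Xset (n : ℕ) : Set P :=
  {w | w ∈ Wset n ∧ ∀ u ∈ SymN n, len n w ≤ len n (w * u)}

/-- `X_n^{(l)}` -/
def Xl (n l : ℕ) : Set P := {w ∈ Xset n | tlen n w = l}

/-- `r_1 = t`, `r_{i+1} = s_i r_i` -/
def rgen : ℕ → P
  | 0 => 1
  | 1 => tgen
  | (i + 2) => sgen (i + 1) * rgen (i + 1)

/-- `a_l = r_1 r_2 ⋯ r_l` -/
def al (l : ℕ) : P := ((List.range l).map (fun k => rgen (k + 1))).prod

/-- the set `X_n^{(l)} ⬝ 𝔖_{l, n-l}` -/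
def XSset (n l : ℕ) : Set P := Set.image2 (· * ·) (Xl n l) (SymLR n l : Set P)

/-- `w = a ⬝ a_l ⬝ σ ⬝ b⁻¹` is the canonical decomposition of `w`
(with `a, b ∈ Y_{l,n-l}`, `σ ∈ 𝔖_{l,n-l}` and additivity of lengths) -/
def IsDecomp (n l : ℕ) (w a σ b : P) : Prop :=
  a ∈ Yset n l ∧ b ∈ Yset n l ∧ σ ∈ SymLR n l ∧ w = a * al l * σ * b⁻¹ ∧
    len n w = len n a + len n (al l) + len n σ + len n b

/-- the relation `w ⇝_L w'` -/
def squig (n : ℕ) (w w' : P) : Prop :=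
  ∃ l a σ b a' σ', tlen n w = l ∧ tlen n w' = l ∧
    IsDecomp n l w a σ b ∧ IsDecomp n l w' a' σ' b ∧ knuthRel n σ σ'

/-! ## The two-parameter Iwahori–Hecke algebra and Kazhdan–Lusztig data -/

/-- the ring `A = ℤ[V^{±1}, v^{±1}]`, as the group algebra of `Γ = ℤ × ℤ`
(a monomial `V^i v^j` corresponds to `(i,j) ∈ ℤ × ℤ`). -/
abbrev RR := AddMonoidAlgebra ℤ (ℤ × ℤ)

/-- the monomial with exponent `g` -/
def mono (g : ℤ × ℤ) : RR := AddMonoidAlgebra.single g 1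

/-- `Γ₋` for the lexicographic order with `V ≫ v`: `V^i v^j < 1` -/
def Gneg (g : ℤ × ℤ) : Prop := g.1 < 0 ∨ (g.1 = 0 ∧ g.2 < 0)

/-- an element of `ℤ[Γ₋]` : all monomials lie in `Γ₋` -/
def inNeg (f : RR) : Prop := ∀ g ∈ f.coeff.support, Gneg g

/-- the bar involution of `A`, `V ↦ V⁻¹`, `v ↦ v⁻¹` -/
def barR : RR → RR := fun f => .ofCoeff (Finsupp.equivMapDomain (Equiv.neg (ℤ × ℤ)) f.coeff)

/-- the parameter `v_s` of a generator (`v_t = V`, `v_{s_i} = v`) -/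
def vgen (g : P) : RR := if g = tgen then mono (1, 0) else mono (0, 1)

/-- the inverse `v_s⁻¹` of the parameter of a generator -/
def vgenInv (g : P) : RR := if g = tgen then mono (-1, 0) else mono (0, -1)

/-- the free `A`-module with basis indexed by permutations; the Hecke algebra
`H_n` is carried by the elements supported on `W_n`. -/
abbrev HH := P →₀ RR

/-- the standard basis element `T_w` -/
def TT (w : P) : HH := Finsupp.single w 1

/-- All the data attached to the Iwahori–Hecke algebra `H_n` of `W_n` over
`A = ℤ[V^{±1}, v^{±1}]`: the multiplication, the bar involution, the
Kazhdan–Lusztig basis `C_w = Σ_y P*_{y,w} T_y` (for the order on `Γ` given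
by `Γ₊ = {V^i v^j : i > 0} ∪ {v^j : j > 0}`), and Lusztig's `M`-polynomials,
together with their defining properties. -/
structure KLData (n : ℕ) where
  mul : HH → HH → HH
  mul_add_left : ∀ a b c, mul (a + b) c = mul a c + mul b c
  mul_add_right : ∀ a b c, mul a (b + c) = mul a b + mul a c
  mul_smul_left : ∀ (r : RR) a b, mul (r • a) b = r • mul a b
  mul_smul_right : ∀ (r : RR) a b, mul a (r • b) = r • mul a b
  mul_assoc : ∀ a b c, mul (mul a b) c = mul a (mul b c)
  one_mul : ∀ a, mul (TT 1) a = a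
  mul_one : ∀ a, mul a (TT 1) = a
  /-- `T_w T_{w'} = T_{w w'}` when lengths add -/
  T_mul : ∀ w w', w ∈ Wset n → w' ∈ Wset n →
    len n (w * w') = len n w + len n w' → mul (TT w) (TT w') = TT (w * w')
  /-- the quadratic relations `T_s² = T_1 + (v_s - v_s⁻¹) T_s` -/
  T_sq : ∀ g ∈ Sset n, mul (TT g) (TT g) = TT 1 + (vgen g - vgenInv g) • TT g
  bar : HH → HH
  bar_add : ∀ a b, bar (a + b) = bar a + bar b
  bar_smul : ∀ (r : RR) a, bar (r • a) = barR r • bar a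
  bar_mul : ∀ a b, bar (mul a b) = mul (bar a) (bar b)
  /-- `bar T_s = T_s⁻¹ = T_s + (v_s⁻¹ - v_s) T_1` -/
  bar_gen : ∀ g ∈ Sset n, bar (TT g) = TT g + (vgenInv g - vgen g) • TT 1
  /-- the Kazhdan–Lusztig basis element `C_w`, whose coordinate at `T_y` is
  the polynomial `P*_{y,w}` -/
  C : P → HH
  /-- `P*_{w,w} = 1` -/
  C_self : ∀ w, C w w = 1
  /-- `P*_{y,w} = 0` unless `y ≤ w` -/
  C_supp : ∀ w y, C w y ≠ 0 → bruhat n y w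
  /-- `P*_{y,w} ∈ ℤ[Γ₋]` for `y < w` -/
  C_neg : ∀ w y, y ≠ w → inNeg (C w y)
  /-- `C_w` is bar-invariant -/
  C_bar : ∀ w, w ∈ Wset n → bar (C w) = C w
  /-- `M s w` is the finitely supported family `z ↦ M^s_{z,w}` -/
  M : P → P → (P →₀ RR)
  M_supp : ∀ s w z, (M s w) z ≠ 0 → bruhat n z w ∧ z ≠ w ∧ len n (s * z) < len n z
  /-- the symmetry condition `bar M^s_{y,w} = M^s_{y,w}` -/
  M_bar : ∀ s w z, barR ((M s w) z) = (M s w) z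
  /-- the condition `M^s_{y,w} + Σ_{y<z<w, sz<z} P*_{y,z} M^s_{z,w} - v_s P*_{y,w} ∈ ℤ[Γ₋]` -/
  M_cond : ∀ s ∈ Sset n, ∀ y w, len n (s * y) < len n y → len n w < len n (s * w) →
    bruhat n y w → y ≠ w →
    inNeg ((M s w) y + (M s w).sum (fun z m => if z = y then 0 else C z y * m)
      - vgen s * C w y)
  /-- `C_s C_w = C_{sw} + Σ_{z<w, sz<z} M^s_{z,w} C_z` when `sw > w` -/
  mulC_up : ∀ s ∈ Sset n, ∀ w ∈ Wset n, len n w < len n (s * w) →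
    mul (C s) (C w) = C (s * w) + (M s w).sum (fun z m => m • C z)
  /-- `C_s C_w = (v_s + v_s⁻¹) C_w` when `sw < w` -/
  mulC_down : ∀ s ∈ Sset n, ∀ w ∈ Wset n, len n (s * w) < len n w →
    mul (C s) (C w) = (vgen s + vgenInv s) • C w

/-- `P_{y,w} = v_y⁻¹ v_w P*_{y,w}` -/
def Ppoly (n : ℕ) (D : KLData n) (y w : P) : RR :=
  mono ((tlen n w : ℤ) - (tlen n y : ℤ),
        ((len n w : ℤ) - (tlen n w : ℤ)) - ((len n y : ℤ) - (tlen n y : ℤ))) * D.C w y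

/-- the `R`-polynomials : `bar T_w = Σ_y R_{y,w} T_y` -/
def Rpoly {n : ℕ} (D : KLData n) (y w : P) : RR := (D.bar (TT w)) y

/-- `y ≤_{L,s} w` : `C_y` occurs with non-zero coefficient in `C_s C_w`
(expressed in the `C`-basis), for some `s ∈ S_n`, `y ≠ w` -/
def leLelem {n : ℕ} (D : KLData n) (y w : P) : Prop :=
  ∃ s ∈ Sset n, len n w < len n (s * w) ∧ (y = s * w ∨ (D.M s w) y ≠ 0)

/-- the preorder `≤_L` -/
def leL {n : ℕ} (D : KLData n) : P → P → Prop := Relation.ReflTransGen (leLelem D)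

/-- the equivalence `∼_L`; its classes are the left cells -/
def simL {n : ℕ} (D : KLData n) (y w : P) : Prop := leL D y w ∧ leL D w y

/-- `f` is a polynomial in `q = v²` -/
def isPolyInQ (f : RR) : Prop := ∀ g ∈ f.coeff.support, g.1 = 0 ∧ 0 ≤ g.2 ∧ 2 ∣ g.2

end

/-! ### Tableau combinatorics -/

namespace RSK

/-- insertion of a whole word into a tableau -/
def insWord (T : Tab) (w : List ℕ) : Tab := w.foldl (fun T x => (insTab x T).1) T

/-- insertion of a word in a row: new row and bumped word -/
def rowWord : List ℕ → List ℕ → List ℕ × List ℕ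
  | R, [] => (R, [])
  | R, x :: w =>
    ((rowWord (insRow x R).1 w).1, (insRow x R).2.toList ++ (rowWord (insRow x R).1 w).2)

theorem rowWord_cons (R : List ℕ) (x : ℕ) (w : List ℕ) : rowWord R (x :: w) =
    ((rowWord (insRow x R).1 w).1, (insRow x R).2.toList ++ (rowWord (insRow x R).1 w).2) := rfl

theorem insRow_split (x : ℕ) (R : List ℕ) (hR : R.Pairwise (· ≤ ·)) :
    (insRow x R = (R ++ [x], none) ∧ ∀ a ∈ R, a ≤ x) ∨
    ∃ A b C, R = A ++ b :: C ∧ insRow x R = (A ++ x :: C, some b) ∧ (∀ a ∈ A, a ≤ x) ∧ x < b := by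
  induction R with
  | nil => left; simp [insRow]
  | cons y ys ih =>
    rw [List.pairwise_cons] at hR
    by_cases h : x < y
    · right; exact ⟨[], y, ys, by simp, by simp [insRow, h], by simp, h⟩
    · rcases ih hR.2 with ⟨h1, h2⟩ | ⟨A, b, C, h1, h2, h3, h4⟩
      · left; simp [insRow, h, h1]; exact ⟨by omega, h2⟩
      · right
        refine ⟨y :: A, b, C, by simp [h1], by simp [insRow, h, h2], ?_, h4⟩
        simp; exact ⟨by omega, h3⟩

theorem insRow_append (x : ℕ) (A B : List ℕ) (hA : ∀ a ∈ A, a ≤ x) :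
    insRow x (A ++ B) = (A ++ (insRow x B).1, (insRow x B).2) := by
  induction A with
  | nil => simp
  | cons a A ih =>
    have h1 := hA a (by simp)
    have h2 := ih (fun c hc => hA c (by simp [hc]))
    simp [insRow, h2, Nat.not_lt.mpr h1]

theorem insRow_append_some (x b : ℕ) (A A' B : List ℕ) (hA : insRow x A = (A', some b)) :
    insRow x (A ++ B) = (A' ++ B, some b) := by
  induction A generalizing A' with
  | nil => simp [insRow] at hA
  | cons a A ih =>
    by_cases h : x < a
    · simp [insRow, h] at hA ⊢
      obtain ⟨rfl, rfl⟩ := hA; simp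
    · simp only [insRow, h, if_false, List.cons_append] at hA ⊢
      have := ih (insRow x A).1 (by ext1; rfl; simpa using congrArg Prod.snd hA)
      rw [this]
      simp only [Prod.mk.injEq] at hA
      simp [← hA.1]

theorem insRow_cons_lt (x y : ℕ) (B : List ℕ) (h : x < y) :
    insRow x (y :: B) = (x :: B, some y) := by simp [insRow, h]

theorem insRow_none (x : ℕ) (A A' : List ℕ) (h : insRow x A = (A', none)) :
    A' = A ++ [x] ∧ ∀ a ∈ A, a ≤ x := by
  induction A generalizing A' with
  | nil => simp [insRow] at h; simp [h]
  | cons a A ih =>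
    by_cases hx : x < a
    · simp [insRow, hx] at h
    · simp only [insRow, hx, if_false, Prod.mk.injEq] at h
      have := ih (insRow x A).1 (by ext1; rfl; exact h.2)
      refine ⟨by rw [← h.1, this.1]; simp, ?_⟩
      simp; exact ⟨by omega, this.2⟩

theorem insRow_big (x : ℕ) (A : List ℕ) (h : ∀ a ∈ A, a ≤ x) :
    insRow x A = (A ++ [x], none) := by
  have := insRow_append x A [] h
  simpa [insRow] using this

theorem insRow_some_mem (x b : ℕ) (A A' : List ℕ) (h : insRow x A = (A', some b)) :
    b ∈ A := by
  induction A generalizing A' with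
  | nil => simp [insRow] at h
  | cons a A ih =>
    by_cases hx : x < a
    · simp [insRow, hx] at h; simp [h]
    · simp only [insRow, hx, if_false, Prod.mk.injEq] at h
      have := ih (insRow x A).1 (by ext1; rfl; exact h.2)
      simp [this]

theorem insRow_mem (x a : ℕ) (A : List ℕ) (h : a ∈ (insRow x A).1) : a = x ∨ a ∈ A := by
  induction A with
  | nil => simp [insRow] at h; simp [h]
  | cons c A ih =>
    by_cases hx : x < c
    · simp [insRow, hx] at h; rcases h with h | h <;> simp [h]
    · simp only [insRow, hx, if_false, List.mem_cons] at h ⊢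
      rcases h with h | h
      · simp [h]
      · rcases ih h with h | h <;> simp [h]

theorem insRow_sorted (x : ℕ) (R : List ℕ) (hR : R.Pairwise (· ≤ ·)) :
    (insRow x R).1.Pairwise (· ≤ ·) := by
  induction R with
  | nil => simp [insRow]
  | cons c A ih =>
    rw [List.pairwise_cons] at hR
    by_cases hx : x < c
    · simp only [insRow, hx, if_true, List.pairwise_cons]
      exact ⟨fun a ha => by have := hR.1 a ha; omega, hR.2⟩
    · simp only [insRow, hx, if_false, List.pairwise_cons]
      refine ⟨fun a ha => ?_, ih hR.2⟩
      rcases insRow_mem _ _ _ ha with h | h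
      · omega
      · exact hR.1 a h

theorem rowWord_sorted (w R : List ℕ) (hR : R.Pairwise (· ≤ ·)) :
    (rowWord R w).1.Pairwise (· ≤ ·) := by
  induction w generalizing R with
  | nil => simpa [rowWord]
  | cons x w ih => exact ih _ (insRow_sorted x R hR)

theorem rowWord_append (R u v : List ℕ) : rowWord R (u ++ v) =
    ((rowWord (rowWord R u).1 v).1, (rowWord R u).2 ++ (rowWord (rowWord R u).1 v).2) := by
  induction u generalizing R with
  | nil => simp [rowWord]
  | cons x u ih => simp [rowWord, ih]

theorem insWord_cons (R : List ℕ) (T : Tab) (w : List ℕ) :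
    insWord (R :: T) w = (rowWord R w).1 :: insWord T (rowWord R w).2 := by
  induction w generalizing R T with
  | nil => simp [insWord, rowWord]
  | cons x w ih =>
    have : insWord (R :: T) (x :: w) = insWord (insTab x (R :: T)).1 w := rfl
    rw [this]
    rcases h : insRow x R with ⟨R', _ | b⟩
    · simp [insTab, h, rowWord, ih]
    · have e : ∀ w, insWord (insTab b T).1 w = insWord T (b :: w) := fun _ => rfl
      simp [insTab, h, rowWord, ih, e]

/-- elementary Knuth moves -/
inductive KN : List ℕ → List ℕ → Prop
  | k1 (p s : List ℕ) (x y z : ℕ) : x ≤ y → y < z → KN (p ++ x :: z :: y :: s) (p ++ z :: x :: y :: s)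
  | k2 (p s : List ℕ) (x y z : ℕ) : x < y → y ≤ z → KN (p ++ y :: x :: z :: s) (p ++ y :: z :: x :: s)

theorem KN.ctx {u v : List ℕ} (h : KN u v) (p s : List ℕ) : KN (p ++ u ++ s) (p ++ v ++ s) := by
  cases h with
  | k1 p' s' x y z h1 h2 =>
    have := KN.k1 (p ++ p') (s' ++ s) x y z h1 h2
    simpa using this
  | k2 p' s' x y z h1 h2 =>
    have := KN.k2 (p ++ p') (s' ++ s) x y z h1 h2
    simpa using this

abbrev KE : List ℕ → List ℕ → Prop := Relation.EqvGen KN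

theorem KE.ctx {u v : List ℕ} (h : KE u v) (p s : List ℕ) : KE (p ++ u ++ s) (p ++ v ++ s) := by
  induction h with
  | rel _ _ h => exact .rel _ _ (h.ctx p s)
  | refl => exact .refl _
  | symm _ _ _ ih => exact .symm _ _ ih
  | trans _ _ _ _ _ h1 h2 => exact .trans _ _ _ h1 h2

/-- either equal or one elementary move, either way -/
def KO (u v : List ℕ) : Prop := u = v ∨ KN u v ∨ KN v u

theorem KO.ctx {u v : List ℕ} (h : KO u v) (p s : List ℕ) : KO (p ++ u ++ s) (p ++ v ++ s) := by
  rcases h with rfl | h | h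
  · left; rfl
  · right; left; exact h.ctx p s
  · right; right; exact h.ctx p s

theorem row_k2 (R : List ℕ) (hR : R.Pairwise (· ≤ ·)) (x y z : ℕ) (h1 : x < y) (h2 : y ≤ z) :
    (rowWord R [y, x, z]).1 = (rowWord R [y, z, x]).1 ∧
    KO (rowWord R [y, x, z]).2 (rowWord R [y, z, x]).2 := by
  -- after inserting `y`, the row is `A ++ y :: C`
  have key : ∀ A C : List ℕ, (A ++ y :: C).Pairwise (· ≤ ·) → ∃ (A' : List ℕ) (b : ℕ) (C' : List ℕ) (o : Option ℕ),
      b ≤ y ∧ (∀ c ∈ o, c ∈ C) ∧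
      rowWord (A ++ y :: C) [x, z] = (A' ++ C', b :: o.toList) ∧
      rowWord (A ++ y :: C) [z, x] = (A' ++ C', o.toList ++ [b]) := by
    intro A C hs
    have hsA : (A ++ [y]).Pairwise (· ≤ ·) := by
      refine hs.sublist ?_
      simp
    have hAy : ∀ a ∈ A, a ≤ y := fun a ha => (List.pairwise_append.1 hs).2.2 a ha y (by simp)
    rcases insRow_split x (A ++ [y]) hsA with ⟨h, h'⟩ | ⟨D, b, E, hD, hi, hDx, hxb⟩
    · exact absurd (h' y (by simp)) (by omega)
    · have hby : b ≤ y := by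
        have : b ∈ A ++ [y] := by rw [hD]; simp
        simp at this
        rcases this with h | h
        · exact hAy b h
        · omega
      have hE : ∀ e ∈ E, e ≤ y := by
        intro e he
        have : e ∈ A ++ [y] := by rw [hD]; simp [he]
        simp at this
        rcases this with h | h
        · exact hAy e h
        · omega
      have e1 : insRow x (A ++ y :: C) = ((D ++ x :: E) ++ C, some b) := by
        have := insRow_append_some x b (A ++ [y]) _ C hi
        simpa using this
      have e2 : insRow z ((D ++ x :: E) ++ C) = ((D ++ x :: E) ++ (insRow z C).1, (insRow z C).2) := by
        apply insRow_append
        intro a ha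
        simp at ha
        rcases ha with h | h | h
        · have := hDx a h; omega
        · omega
        · have := hE a h; omega
      have e3 : insRow z (A ++ y :: C) = ((A ++ [y]) ++ (insRow z C).1, (insRow z C).2) := by
        have := insRow_append z (A ++ [y]) C (by
          intro a ha; simp at ha
          rcases ha with h | h
          · have := hAy a h; omega
          · omega)
        simpa using this
      have e4 : insRow x ((A ++ [y]) ++ (insRow z C).1) = ((D ++ x :: E) ++ (insRow z C).1, some b) :=
        insRow_append_some x b (A ++ [y]) _ _ hi
      refine ⟨D ++ x :: E, b, (insRow z C).1, (insRow z C).2, hby, ?_, ?_, ?_⟩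
      · intro c hc
        exact insRow_some_mem z c C (insRow z C).1 (by ext1; rfl; exact hc)
      · simp only [rowWord, e1, e2]; simp
      · simp only [rowWord, e3, e4]; simp
  rcases insRow_split y R hR with ⟨h, h'⟩ | ⟨A, b, C, hA, hi, hAy, hyb⟩
  · have hs := insRow_sorted y R hR
    rw [h] at hs
    obtain ⟨A', b, C', o, k1, k2, k3, k4⟩ := key R [] hs
    have ho : o = none := by
      cases o with
      | none => rfl
      | some c => simp at k2
    subst ho
    rw [rowWord_cons R y [x, z], rowWord_cons R y [z, x], h]
    simp only [k3, k4]
    exact ⟨by trivial, Or.inl (by simp)⟩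
  · have hs := insRow_sorted y R hR
    rw [hi] at hs
    obtain ⟨A', b', C', o, k1, k2, k3, k4⟩ := key A C hs
    rw [rowWord_cons R y [x, z], rowWord_cons R y [z, x], hi]
    simp only [k3, k4]
    refine ⟨by trivial, ?_⟩
    cases o with
    | none => left; simp
    | some c =>
      right; left
      have hbc : b ≤ c := by
        rw [hA] at hR
        have := (List.pairwise_append.1 hR).2.1
        exact (List.pairwise_cons.1 this).1 c (k2 c rfl)
      have := KN.k2 [] [] b' b c (by omega) hbc
      simpa using this

theorem row_k1 (R : List ℕ) (hR : R.Pairwise (· ≤ ·)) (x y z : ℕ) (h1 : x ≤ y) (h2 : y < z) :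
    (rowWord R [x, z, y]).1 = (rowWord R [z, x, y]).1 ∧
    KO (rowWord R [x, z, y]).2 (rowWord R [z, x, y]).2 := by
  rcases insRow_split z R hR with ⟨h, h'⟩ | ⟨A, b, C, hA, hi, hAz, hzb⟩
  · -- z is appended
    rcases insRow_split x R hR with ⟨g, g'⟩ | ⟨D, c, E, hD, gi, hDx, hxc⟩
    · have e2 : insRow z (R ++ [x]) = (R ++ [x] ++ [z], none) :=
        insRow_big _ _ (by intro a ha; simp at ha; rcases ha with k | k; exact h' a k; omega)
      have e3 : insRow y (R ++ [x] ++ [z]) = (R ++ [x] ++ [y], some z) := by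
        rw [insRow_append y (R ++ [x]) [z], insRow_cons_lt y z [] h2]
        intro a ha; simp at ha; rcases ha with k | k
        · have := g' a k; omega
        · omega
      have e5 : insRow x (R ++ [z]) = (R ++ [x], some z) := by
        rw [insRow_append x R [z] g', insRow_cons_lt x z [] (by omega)]
      have e6 : insRow y (R ++ [x]) = (R ++ [x] ++ [y], none) :=
        insRow_big _ _ (by
          intro a ha; simp at ha; rcases ha with k | k
          · have := g' a k; omega
          · omega)
      simp only [rowWord, g, e2, e3, h, e5, e6]
      exact ⟨by trivial, Or.inl (by simp)⟩
    · have e2 : insRow z (D ++ x :: E) = (D ++ x :: E ++ [z], none) := by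
        apply insRow_big
        intro a ha; simp at ha
        rcases ha with k | k | k
        · exact h' a (by rw [hD]; simp [k])
        · omega
        · exact h' a (by rw [hD]; simp [k])
      have e5 : insRow x (R ++ [z]) = (D ++ x :: E ++ [z], some c) :=
        insRow_append_some x c R _ _ gi
      simp only [rowWord, gi, e2, h, e5]
      exact ⟨by trivial, Or.inl (by simp)⟩
  · -- z bumps b
    have hb : ∀ c ∈ C, b ≤ c := by
      rw [hA] at hR
      exact (List.pairwise_cons.1 (List.pairwise_append.1 hR).2.1).1
    have hAs : A.Pairwise (· ≤ ·) := by
      rw [hA] at hR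
      exact (List.pairwise_append.1 hR).1
    rcases insRow_split x A hAs with ⟨g, g'⟩ | ⟨D, c, E, hD, gi, hDx, hxc⟩
    · have e1 : insRow x R = (A ++ x :: C, some b) := by
        rw [hA, insRow_append x A _ g', insRow_cons_lt x b C (by omega)]
      have e2 : insRow z (A ++ x :: C) = ((A ++ [x]) ++ (insRow z C).1, (insRow z C).2) := by
        have := insRow_append z (A ++ [x]) C (by
          intro a ha; simp at ha; rcases ha with k | k
          · have := g' a k; omega
          · omega)
        simpa using this
      have e5 : insRow x (A ++ z :: C) = (A ++ x :: C, some z) := by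
        rw [insRow_append x A _ g', insRow_cons_lt x z C (by omega)]
      have hAx : ∀ a ∈ A ++ [x], a ≤ y := by
        intro a ha; simp at ha; rcases ha with k | k
        · have := g' a k; omega
        · omega
      have e6 : insRow y (A ++ x :: C) = ((A ++ [x]) ++ (insRow y C).1, (insRow y C).2) := by
        have := insRow_append y (A ++ [x]) C hAx
        simpa using this
      cases C with
      | nil =>
        have e3 : insRow y (A ++ [x] ++ [z]) = (A ++ [x] ++ [y], some z) := by
          rw [insRow_append y (A ++ [x]) [z] hAx, insRow_cons_lt y z [] h2]
        simp only [insRow] at e2 e6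
        simp only [rowWord, e1, e2, e3, hi, e5, e6]
        exact ⟨by trivial, Or.inl (by simp)⟩
      | cons c C =>
        have hbc := hb c (by simp)
        rw [insRow_cons_lt z c C (by omega)] at e2
        rw [insRow_cons_lt y c C (by omega)] at e6
        have e3 : insRow y (A ++ [x] ++ z :: C) = (A ++ [x] ++ y :: C, some z) := by
          rw [insRow_append y (A ++ [x]) _ hAx, insRow_cons_lt y z _ h2]
        simp only [rowWord, e1, e2, e3, hi, e5, e6]
        refine ⟨by trivial, ?_⟩
        right; right
        have := KN.k2 [] [] z b c hzb hbc
        simpa using this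
    · have hAc : c ∈ A := by rw [hD]; simp
      have hcz := hAz c hAc
      have e1 : insRow x R = (D ++ x :: E ++ b :: C, some c) := by
        rw [hA]; exact insRow_append_some x c A _ _ gi
      have hDz : ∀ a ∈ D ++ x :: E, a ≤ z := by
        intro a ha; simp at ha
        rcases ha with k | k | k
        · exact hAz a (by rw [hD]; simp [k])
        · omega
        · exact hAz a (by rw [hD]; simp [k])
      have e2 : insRow z (D ++ x :: E ++ b :: C) = (D ++ x :: E ++ z :: C, some b) := by
        rw [insRow_append z _ _ hDz, insRow_cons_lt z b C hzb]
      have e5 : insRow x (A ++ z :: C) = (D ++ x :: E ++ z :: C, some c) :=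
        insRow_append_some x c A _ _ gi
      have e3 : insRow y (D ++ x :: E ++ z :: C) =
          (D ++ x :: (insRow y (E ++ z :: C)).1, (insRow y (E ++ z :: C)).2) := by
        have := insRow_append y (D ++ [x]) (E ++ z :: C) (by
          intro a ha; simp at ha; rcases ha with k | k
          · have := hDx a k; omega
          · omega)
        simpa using this
      have hEs : (E ++ [z]).Pairwise (· ≤ ·) := by
        rw [hD] at hAs
        rw [List.pairwise_append]
        refine ⟨(List.pairwise_cons.1 (List.pairwise_append.1 hAs).2.1).2, by simp, ?_⟩
        intro a ha b hb; simp at hb; subst hb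
        exact hAz a (by rw [hD]; simp [ha])
      rcases insRow_split y (E ++ [z]) hEs with ⟨k, k'⟩ | ⟨F, d, G, hF, ki, hFy, hyd⟩
      · exact absurd (k' z (by simp)) (by omega)
      · have e4 : insRow y (E ++ z :: C) = (F ++ y :: G ++ C, some d) := by
          have := insRow_append_some y d (E ++ [z]) _ C ki
          simpa using this
        have hd : d ∈ E ++ [z] := by rw [hF]; simp
        have hcd : c ≤ d := by
          simp at hd
          rcases hd with k | k
          · rw [hD] at hAs
            exact (List.pairwise_cons.1 (List.pairwise_append.1 hAs).2.1).1 d k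
          · omega
        have hdz : d ≤ z := by
          simp at hd
          rcases hd with k | k
          · exact hAz d (by rw [hD]; simp [k])
          · omega
        simp only [rowWord, e1, e2, e3, hi, e5, e4]
        refine ⟨by trivial, ?_⟩
        right; left
        have := KN.k1 [] [] c d b hcd (by omega)
        simpa using this

theorem row_KN (R u v : List ℕ) (hR : R.Pairwise (· ≤ ·)) (h : KN u v) :
    (rowWord R u).1 = (rowWord R v).1 ∧ KO (rowWord R u).2 (rowWord R v).2 := by
  have gen : ∀ p s a b : List ℕ, (∀ R : List ℕ, R.Pairwise (· ≤ ·) →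
      (rowWord R a).1 = (rowWord R b).1 ∧ KO (rowWord R a).2 (rowWord R b).2) →
      (rowWord R (p ++ (a ++ s))).1 = (rowWord R (p ++ (b ++ s))).1 ∧
      KO (rowWord R (p ++ (a ++ s))).2 (rowWord R (p ++ (b ++ s))).2 := by
    intro p s a b hab
    obtain ⟨h1, h2⟩ := hab (rowWord R p).1 (rowWord_sorted _ _ hR)
    simp only [rowWord_append, h1, true_and]
    have := h2.ctx (rowWord R p).2 (rowWord (rowWord (rowWord R p).1 b).1 s).2
    simpa using this
  cases h with
  | k1 p s x y z h1 h2 =>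
    exact gen p s [x, z, y] [z, x, y] (fun R hR => row_k1 R hR x y z h1 h2)
  | k2 p s x y z h1 h2 =>
    exact gen p s [y, x, z] [y, z, x] (fun R hR => row_k2 R hR x y z h1 h2)

theorem insTab_nil_nil (x : ℕ) : insTab x [] = ((insTab x [[]]).1, (insTab x [[]]).2) := by
  simp [insTab, insRow]

theorem insWord_nil_eq (x : ℕ) (w : List ℕ) : insWord [] (x :: w) = insWord [[]] (x :: w) := by
  simp [insWord, insTab, insRow]

theorem insWord_KN (T : Tab) (hT : ∀ R ∈ T, R.Pairwise (· ≤ ·)) (u v : List ℕ) (h : KN u v) :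
    insWord T u = insWord T v := by
  have hne : ∀ u v, KN u v → insWord [[]] u = insWord [[]] v → insWord [] u = insWord [] v := by
    intro u v h he
    have hu : u ≠ [] := by cases h <;> simp
    have hv : v ≠ [] := by cases h <;> simp
    obtain ⟨a, u, rfl⟩ := List.exists_cons_of_ne_nil hu
    obtain ⟨b, v, rfl⟩ := List.exists_cons_of_ne_nil hv
    rwa [insWord_nil_eq, insWord_nil_eq]
  have hcons : ∀ (R : List ℕ) (T : Tab), R.Pairwise (· ≤ ·) →
      (∀ u v, KN u v → insWord T u = insWord T v) →
      ∀ u v, KN u v → insWord (R :: T) u = insWord (R :: T) v := by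
    intro R T hR ih u v h
    obtain ⟨h1, h2⟩ := row_KN R u v hR h
    rw [insWord_cons, insWord_cons, h1]
    rcases h2 with h2 | h2 | h2
    · rw [h2]
    · rw [ih _ _ h2]
    · rw [ih _ _ h2]
  have hlen : ∀ k : ℕ, ∀ u v, u.length ≤ k → KN u v → insWord [] u = insWord [] v := by
    intro k
    induction k with
    | zero =>
      intro u v hu h
      cases h <;> simp at hu
    | succ k ih =>
      intro u v hu h
      refine hne u v h ?_
      obtain ⟨h1, h2⟩ := row_KN [] u v (by simp) h
      rw [insWord_cons, insWord_cons, h1]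
      have hl : ∀ (w R : List ℕ), (rowWord R w).2.length + (rowWord R w).1.length
          = R.length + w.length := by
        intro w
        induction w with
        | nil => intro R; simp [rowWord]
        | cons x w ihw =>
          intro R
          have := ihw (insRow x R).1
          have hx : (insRow x R).1.length + (insRow x R).2.toList.length = R.length + 1 := by
            clear this
            induction R with
            | nil => simp [insRow]
            | cons a R ihR =>
              by_cases hxa : x < a
              · simp [insRow, hxa]
              · simp only [insRow, hxa, if_false, List.length_cons]; omega
          simp only [rowWord, List.length_append, List.length_cons]
          omega
      have hpos : ∀ w : List ℕ, w ≠ [] → 0 < (rowWord [] w).1.length := by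
        intro w hw
        have mono : ∀ (w R : List ℕ), R.length ≤ (rowWord R w).1.length := by
          intro w
          induction w with
          | nil => intro R; simp [rowWord]
          | cons x w ihw =>
            intro R
            have := ihw (insRow x R).1
            have hx : R.length ≤ (insRow x R).1.length := by
              clear this
              induction R with
              | nil => simp
              | cons a R ihR =>
                by_cases hxa : x < a
                · simp [insRow, hxa]
                · simp only [insRow, hxa, if_false, List.length_cons]; omega
            simp only [rowWord]; omega
        obtain ⟨a, w, rfl⟩ := List.exists_cons_of_ne_nil hw
        have := mono w (insRow a []).1
        simp only [rowWord]
        simp [insRow] at this ⊢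
        omega
      have hune : u ≠ [] := by cases h <;> simp
      have hvne : v ≠ [] := by cases h <;> simp
      have huv : v.length = u.length := by cases h <;> simp
      have a1 := hl u []
      have a2 := hl v []
      have a3 := hpos u hune
      have a4 := hpos v hvne
      simp only [List.length_nil] at a1 a2
      rcases h2 with h2 | h2 | h2
      · rw [h2]
      · rw [ih _ _ (by omega) h2]
      · rw [ih _ _ (by omega) h2]
  have main : ∀ T : Tab, (∀ R ∈ T, R.Pairwise (· ≤ ·)) → ∀ u v, KN u v → insWord T u = insWord T v := by
    intro T
    induction T with
    | nil => intro _ u v h; exact hlen u.length u v le_rfl h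
    | cons R T ih =>
      intro hT
      exact hcons R T (hT R (by simp)) (ih (fun R' h => hT R' (by simp [h])))
  exact main T hT u v h

theorem insWord_KE (u v : List ℕ) (h : KE u v) : insWord [] u = insWord [] v := by
  induction h with
  | rel _ _ h => exact insWord_KN [] (by simp) _ _ h
  | refl => rfl
  | symm _ _ _ ih => exact ih.symm
  | trans _ _ _ _ _ h1 h2 => exact h1.trans h2

/-- the reading word of a tableau -/
def reading : Tab → List ℕ
  | [] => []
  | R :: T => reading T ++ R

theorem move_left (x b : ℕ) (C : List ℕ) (hC : (b :: C).Pairwise (· ≤ ·)) (hx : x < b) :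
    KE (b :: C ++ [x]) (b :: x :: C) := by
  induction C using List.reverseRecOn with
  | nil => exact .refl _
  | append_singleton C c ih =>
    have hC' : (b :: C).Pairwise (· ≤ ·) := hC.sublist (by simp)
    have h1 := (ih hC').ctx [] [c]
    refine Relation.EqvGen.trans _ (b :: C ++ [x] ++ [c]) _ ?_ (by simpa using h1)
    -- last letter of b :: C
    obtain ⟨D, d, hd⟩ : ∃ D d, b :: C = D ++ [d] :=
      ⟨(b :: C).dropLast, (b :: C).getLast (by simp), by rw [List.dropLast_append_getLast]⟩
    have hdm : d ∈ b :: C := by rw [hd]; simp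
    have hbd : b ≤ d := by
      rcases List.mem_cons.1 hdm with h | h
      · omega
      · exact (List.pairwise_cons.1 hC').1 d h
    have hdc : d ≤ c := by
      have : (b :: C ++ [c]).Pairwise (· ≤ ·) := by simpa using hC
      exact (List.pairwise_append.1 this).2.2 d hdm c (by simp)
    have := KN.k2 D [] x d c (by omega) hdc
    have e1 : b :: (C ++ [c]) ++ [x] = D ++ d :: c :: x :: [] := by
      have : b :: (C ++ [c]) ++ [x] = (b :: C) ++ [c, x] := by simp
      rw [this, hd]; simp
    have e2 : b :: C ++ [x] ++ [c] = D ++ d :: x :: c :: [] := by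
      have : b :: C ++ [x] ++ [c] = (b :: C) ++ [x, c] := by simp
      rw [this, hd]; simp
    rw [e1, e2]
    exact .symm _ _ (.rel _ _ this)

theorem move_front (x b : ℕ) (A : List ℕ) (hA : (A ++ [x]).Pairwise (· ≤ ·)) (hx : x < b) :
    KE (A ++ [b, x]) (b :: A ++ [x]) := by
  induction A with
  | nil => exact .refl _
  | cons a A ih =>
    rw [List.cons_append, List.pairwise_cons] at hA
    have h1 := (ih hA.2).ctx [a] []
    refine Relation.EqvGen.trans _ (a :: b :: (A ++ [x])) _ (by simpa using h1) ?_
    cases hd : A ++ [x] with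
    | nil => simp at hd
    | cons d D =>
      have hdm : d ∈ A ++ [x] := by rw [hd]; simp
      have had := hA.1 d hdm
      have hdx : d ≤ x := by
        simp at hdm
        rcases hdm with h | h
        · exact (List.pairwise_append.1 hA.2).2.2 d h x (by simp)
        · omega
      have := KN.k1 [] D a d b had (by omega)
      have e : b :: a :: A ++ [x] = b :: a :: d :: D := by simp [hd]
      rw [e]
      exact .rel _ _ this

theorem insTab_reading (x : ℕ) (T : Tab) (hT : ∀ R ∈ T, R.Pairwise (· ≤ ·)) :
    KE (reading T ++ [x]) (reading (insTab x T).1) ∧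
    ∀ R ∈ (insTab x T).1, R.Pairwise (· ≤ ·) := by
  induction T generalizing x with
  | nil => simp [insTab, reading]; exact .refl _
  | cons R T ih =>
    have hR := hT R (by simp)
    have hT' : ∀ R ∈ T, R.Pairwise (· ≤ ·) := fun R' h => hT R' (by simp [h])
    have hs := insRow_sorted x R hR
    rcases insRow_split x R hR with ⟨h, -⟩ | ⟨A, b, C, hA, hi, hAx, hxb⟩
    · rw [h] at hs
      simp only [insTab, h, reading]
      constructor
      · rw [List.append_assoc]; exact .refl _
      · intro R' hR'
        rcases List.mem_cons.1 hR' with rfl | h'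
        · exact hs
        · exact hT' _ h'
    · rw [hi] at hs
      obtain ⟨i1, i2⟩ := ih b hT'
      simp only [insTab, hi, reading]
      constructor
      · have hbC : (b :: C).Pairwise (· ≤ ·) := by
          rw [hA] at hR; exact (List.pairwise_append.1 hR).2.1
        have hAs : (A ++ [x]).Pairwise (· ≤ ·) := hs.sublist (by simp)
        have m1 := (move_left x b C hbC hxb).ctx (reading T ++ A) []
        have m2 := (move_front x b A hAs hxb).ctx (reading T) C
        have m3 := i1.ctx [] (A ++ x :: C)
        rw [hA]
        refine Relation.EqvGen.trans _ _ _ (by simpa using m1) ?_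
        refine Relation.EqvGen.trans _ _ _ (by simpa using m2) ?_
        simpa using m3
      · intro R' hR'
        rcases List.mem_cons.1 hR' with rfl | h'
        · exact hs
        · exact i2 _ h'

theorem insWord_reading (w : List ℕ) : KE w (reading (insWord [] w)) := by
  have : KE w (reading (insWord [] w)) ∧ ∀ R ∈ insWord [] w, R.Pairwise (· ≤ ·) := by
    induction w using List.reverseRecOn with
    | nil => simp [insWord, reading]; exact .refl _
    | append_singleton w x ih =>
      have e : insWord [] (w ++ [x]) = (insTab x (insWord [] w)).1 := by simp [insWord]
      rw [e]
      obtain ⟨h1, h2⟩ := insTab_reading x _ ih.2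
      refine ⟨?_, h2⟩
      have := ih.1.ctx [] [x]
      exact .trans _ _ _ (by simpa using this) h1
  exact this.1

theorem knuth_thm (u v : List ℕ) : insWord [] u = insWord [] v ↔ KE u v := by
  refine ⟨fun h => ?_, insWord_KE u v⟩
  have h1 := insWord_reading u
  have h2 := insWord_reading v
  rw [h] at h1
  exact .trans _ _ _ h1 (.symm _ _ h2)

/-! ### Symmetry -/

/-- `Inv m i P₀ Q₀ P Q` : `P` is `P₀` with `m` added at a box, and `Q` is the insertion of `i` in
`Q₀`, the new box being the same. -/
inductive Inv (m : ℕ) : ℕ → Tab → Tab → Tab → Tab → Prop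
  | nil (i : ℕ) : Inv m i [] [] [[m]] [[i]]
  | here (i : ℕ) (R S S' : List ℕ) (T U : Tab) : insRow i S = (S', none) → T.length = U.length →
      Inv m i (R :: T) (S :: U) ((R ++ [m]) :: T) (S' :: U)
  | next (i b : ℕ) (R S S' : List ℕ) (T U T' U' : Tab) : insRow i S = (S', some b) →
      Inv m b T U T' U' → Inv m i (R :: T) (S :: U) (R :: T') (S' :: U')

theorem Inv.eq {m i : ℕ} {P0 Q0 P1 Q1 : Tab} (h : Inv m i P0 Q0 P1 Q1) : Q1 = (insTab i Q0).1 := by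
  induction h with
  | nil => rfl
  | here i R S S' T U h _ => simp [insTab, h]
  | next i b R S S' T U T' U' h _ ih => simp [insTab, h, ih]

theorem place_zero_cons (q c : ℕ) (S : List ℕ) (U : Tab) :
    place q (0, c) (S :: U) = (S ++ [q]) :: U := by simp [place]

theorem place_succ_cons (q r c : ℕ) (S : List ℕ) (U : Tab) :
    place q (r + 1, c) (S :: U) = S :: place q (r, c) U := by
  by_cases h : r < U.length <;> simp [place, h]

theorem place_nil (q : ℕ) (c : ℕ × ℕ) : place q c [] = [[q]] := by simp [place]

theorem Inv.start (m i : ℕ) (T U : Tab) (hTU : T.length = U.length)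
    (hT : ∀ R ∈ T, ∀ a ∈ R, a < m) (hU : ∀ S ∈ U, ∀ a ∈ S, a < i) :
    Inv m i T U (insTab m T).1 (place i (insTab m T).2 U) := by
  cases T with
  | nil =>
    cases U with
    | nil => simp [insTab, place_nil]; exact .nil i
    | cons S U => simp at hTU
  | cons R T =>
    cases U with
    | nil => simp at hTU
    | cons S U =>
      have e1 := insRow_big m R (fun a ha => (hT R (by simp) a ha).le)
      have e2 := insRow_big i S (fun a ha => (hU S (by simp) a ha).le)
      simp only [insTab, e1, place_zero_cons]
      exact .here i R S _ T U e2 (by simpa using hTU)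

theorem length_place (x q : ℕ) (T U : Tab) (h : T.length = U.length) :
    (insTab x T).1.length = (place q (insTab x T).2 U).length := by
  induction T generalizing x U with
  | nil =>
    cases U with
    | nil => simp [insTab, place_nil]
    | cons S U => simp at h
  | cons R T ih =>
    cases U with
    | nil => simp at h
    | cons S U =>
      simp at h
      rcases hx : insRow x R with ⟨R', _ | b⟩
      · simp [insTab, hx, place_zero_cons, h]
      · simp [insTab, hx, place_succ_cons, ih b U h]

theorem Inv.step {m i : ℕ} {P0 Q0 P1 Q1 : Tab} (h : Inv m i P0 Q0 P1 Q1) (x q : ℕ)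
    (hx : x < m) (hP : ∀ R ∈ P0, ∀ a ∈ R, a < m) (hi : i < q) (hQ : ∀ S ∈ Q0, ∀ a ∈ S, a < q) :
    Inv m i (insTab x P0).1 (place q (insTab x P0).2 Q0)
      (insTab x P1).1 (place q (insTab x P1).2 Q1) := by
  induction h generalizing x with
  | nil i =>
    have e : insRow x [m] = ([x], some m) := insRow_cons_lt _ _ _ hx
    have e' : insRow i [q] = ([i], some q) := insRow_cons_lt _ _ _ hi
    simp only [insTab, e, place_nil, place_succ_cons]
    exact .next i q [x] [q] [i] [] [] [[m]] [[q]] e' (.nil q)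
  | here i R S S' T U h1 h2 =>
    obtain ⟨rfl, hS⟩ := insRow_none _ _ _ h1
    rcases hxR : insRow x R with ⟨R', _ | b⟩
    · obtain ⟨rfl, hR⟩ := insRow_none _ _ _ hxR
      have e : insRow x (R ++ [m]) = (R ++ [x], some m) := by
        rw [insRow_append x R _ hR, insRow_cons_lt _ _ _ hx]
      have e' : insRow i (S ++ [q]) = (S ++ [i], some q) := by
        rw [insRow_append i S _ hS, insRow_cons_lt _ _ _ hi]
      simp only [insTab, hxR, e, place_zero_cons, place_succ_cons]
      exact .next i q _ _ _ _ _ _ _ e' (Inv.start m q T U h2 (fun R' h => hP R' (by simp [h]))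
        (fun R' h => hQ R' (by simp [h])))
    · have e := insRow_append_some x b R R' [m] hxR
      simp only [insTab, hxR, e, place_succ_cons]
      exact .here i _ _ _ _ _ h1 (length_place b q T U h2)
  | next i b R S S' T U T' U' h1 h2 ih =>
    rcases hxR : insRow x R with ⟨R', _ | c⟩
    · have e := insRow_append_some i b S S' [q] h1
      simp only [insTab, hxR, place_zero_cons]
      exact .next i b _ _ _ _ _ _ _ e h2
    · simp only [insTab, hxR, place_succ_cons]
      refine .next i b _ _ _ _ _ _ _ h1 (ih c ?_ ?_ ?_ ?_)
      · exact hP R (by simp) c (insRow_some_mem _ _ _ _ hxR)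
      · exact fun R' h => hP R' (by simp [h])
      · exact hQ S (by simp) b (insRow_some_mem _ _ _ _ h1)
      · exact fun R' h => hQ R' (by simp [h])

/-- Robinson-Schensted for a list of pairs (label, value) -/
def rsStep (st : Tab × Tab) (p : ℕ × ℕ) : Tab × Tab :=
  ((insTab p.2 st.1).1, place p.1 (insTab p.2 st.1).2 st.2)

def rs (l : List (ℕ × ℕ)) : Tab × Tab := l.foldl rsStep ([], [])

theorem insTab_mem (x : ℕ) (T : Tab) (a : ℕ) (R : List ℕ) (hR : R ∈ (insTab x T).1) (ha : a ∈ R) :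
    a = x ∨ ∃ R ∈ T, a ∈ R := by
  induction T generalizing x with
  | nil => simp [insTab] at hR; subst hR; simp at ha; exact Or.inl ha
  | cons S T ih =>
    have hm := insRow_mem x a S
    rcases hx : insRow x S with ⟨S', _ | b⟩
    · rw [hx] at hm
      simp only [insTab, hx, List.mem_cons] at hR
      rcases hR with rfl | hR
      · rcases hm ha with h | h
        · exact Or.inl h
        · exact Or.inr ⟨S, by simp, h⟩
      · exact Or.inr ⟨R, by simp [hR], ha⟩
    · rw [hx] at hm
      simp only [insTab, hx, List.mem_cons] at hR
      rcases hR with rfl | hR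
      · rcases hm ha with h | h
        · exact Or.inl h
        · exact Or.inr ⟨S, by simp, h⟩
      · rcases ih b hR with rfl | ⟨R', h, h'⟩
        · exact Or.inr ⟨S, by simp, insRow_some_mem _ _ _ _ hx⟩
        · exact Or.inr ⟨R', by simp [h], h'⟩

theorem place_mem (q : ℕ) (c : ℕ × ℕ) (T : Tab) (a : ℕ) (R : List ℕ) (hR : R ∈ place q c T)
    (ha : a ∈ R) : a = q ∨ ∃ R ∈ T, a ∈ R := by
  obtain ⟨r, c⟩ := c
  induction T generalizing r with
  | nil => simp [place_nil] at hR; subst hR; simp at ha; exact Or.inl ha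
  | cons S T ih =>
    cases r with
    | zero =>
      rw [place_zero_cons, List.mem_cons] at hR
      rcases hR with rfl | hR
      · simp at ha
        rcases ha with h | h
        · exact Or.inr ⟨S, by simp, h⟩
        · exact Or.inl h
      · exact Or.inr ⟨R, by simp [hR], ha⟩
    | succ r =>
      rw [place_succ_cons, List.mem_cons] at hR
      rcases hR with rfl | hR
      · exact Or.inr ⟨R, by simp, ha⟩
      · rcases ih r hR with h | ⟨R', h, h'⟩
        · exact Or.inl h
        · exact Or.inr ⟨R', by simp [h], h'⟩

theorem rs_append_singleton (l : List (ℕ × ℕ)) (p : ℕ × ℕ) : rs (l ++ [p]) = rsStep (rs l) p := by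
  simp [rs]

theorem rs_facts (l : List (ℕ × ℕ)) : (rs l).1.length = (rs l).2.length ∧
    (∀ R ∈ (rs l).1, ∀ a ∈ R, ∃ p ∈ l, p.2 = a) ∧ (∀ R ∈ (rs l).2, ∀ a ∈ R, ∃ p ∈ l, p.1 = a) := by
  induction l using List.reverseRecOn with
  | nil => simp [rs]
  | append_singleton l p ih =>
    rw [rs_append_singleton]
    obtain ⟨h1, h2, h3⟩ := ih
    refine ⟨length_place _ _ _ _ h1, ?_, ?_⟩
    · intro R hR a ha
      rcases insTab_mem _ _ a R hR ha with h | ⟨R', hR', h⟩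
      · exact ⟨p, by simp, h.symm⟩
      · obtain ⟨p', hp, hp'⟩ := h2 R' hR' a h
        exact ⟨p', by simp [hp], hp'⟩
    · intro R hR a ha
      rcases place_mem _ _ _ a R hR ha with h | ⟨R', hR', h⟩
      · exact ⟨p, by simp, h.symm⟩
      · obtain ⟨p', hp, hp'⟩ := h3 R' hR' a h
        exact ⟨p', by simp [hp], hp'⟩

theorem rs_insert (l1 l2 : List (ℕ × ℕ)) (i m : ℕ) (hm : ∀ p ∈ l1 ++ l2, p.2 < m)
    (hl : (l1 ++ (i, m) :: l2).Pairwise (fun p q => p.1 < q.1)) :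
    (rs (l1 ++ (i, m) :: l2)).2 = (insTab i (rs (l1 ++ l2)).2).1 := by
  suffices Inv m i (rs (l1 ++ l2)).1 (rs (l1 ++ l2)).2 (rs (l1 ++ (i, m) :: l2)).1
      (rs (l1 ++ (i, m) :: l2)).2 from this.eq
  induction l2 using List.reverseRecOn with
  | nil =>
    rw [rs_append_singleton, List.append_nil]
    obtain ⟨h1, h2, h3⟩ := rs_facts l1
    refine Inv.start m i _ _ h1 ?_ ?_
    · intro R hR a ha
      obtain ⟨p, hp, rfl⟩ := h2 R hR a ha
      exact hm p (by simp [hp])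
    · intro R hR a ha
      obtain ⟨p, hp, rfl⟩ := h3 R hR a ha
      exact (List.pairwise_append.1 hl).2.2 p hp (i, m) (by simp)
  | append_singleton l2 q ih =>
    have e1 : l1 ++ (l2 ++ [q]) = (l1 ++ l2) ++ [q] := by simp
    have e2 : l1 ++ (i, m) :: (l2 ++ [q]) = (l1 ++ (i, m) :: l2) ++ [q] := by simp
    rw [e2] at hl
    have hlt := (List.pairwise_append.1 hl).2.2
    rw [e1] at hm
    rw [e1, e2, rs_append_singleton, rs_append_singleton]
    obtain ⟨h1, h2, h3⟩ := rs_facts (l1 ++ l2)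
    refine Inv.step (ih (fun p hp => hm p (by
      rw [List.mem_append]; exact Or.inl hp)) (List.pairwise_append.1 hl).1) q.2 q.1 ?_ ?_ ?_ ?_
    · exact hm q (by simp)
    · intro R hR a ha
      obtain ⟨p, hp, rfl⟩ := h2 R hR a ha
      exact hm p (by rw [List.mem_append]; exact Or.inl hp)
    · exact hlt (i, m) (by simp) q (by simp)
    · intro R hR a ha
      obtain ⟨p, hp, rfl⟩ := h3 R hR a ha
      refine hlt p ?_ q (by simp)
      simp at hp ⊢
      tauto

end RSK

/-! ### Length and descents -/

namespace RSK

theorem sgen_apply (i : ℕ) (hi : 1 ≤ i) (a : ℤ) : sgen i a =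
    if a = i then (i : ℤ) + 1 else if a = i + 1 then (i : ℤ) else
    if a = -i then -((i : ℤ) + 1) else if a = -(i + 1) then -(i : ℤ) else a := by
  simp only [sgen, Equiv.Perm.mul_apply, Equiv.swap_apply_def]
  split_ifs <;> omega

theorem sgen_invol (i : ℕ) (hi : 1 ≤ i) (a : ℤ) : sgen i (sgen i a) = a := by
  rw [sgen_apply i hi (sgen i a), sgen_apply i hi a]
  split_ifs <;> omega

theorem sgen_inv (i : ℕ) (hi : 1 ≤ i) : (sgen i)⁻¹ = sgen i := by
  rw [inv_eq_iff_mul_eq_one]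
  ext a; simp [sgen_invol i hi]

theorem ttgen_apply (i : ℕ) (hi : 1 ≤ i) (a : ℤ) : ttgen i a =
    if a = i then -(i : ℤ) else if a = -i then (i : ℤ) else a := by
  simp only [ttgen, Equiv.swap_apply_def]

theorem ttgen_inv (i : ℕ) : (ttgen i)⁻¹ = ttgen i := by
  simp [ttgen]

theorem tgen_eq : tgen = ttgen 1 := by simp [tgen, ttgen]

theorem Wset_mul {n : ℕ} {x y : P} (hx : x ∈ Wset n) (hy : y ∈ Wset n) : x * y ∈ Wset n := by
  refine ⟨fun i => ?_, fun i hi => ?_⟩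
  · simp [hy.1, hx.1]
  · simp [hy.2 i hi, hx.2 i hi]

theorem Wset_inv {n : ℕ} {x : P} (hx : x ∈ Wset n) : x⁻¹ ∈ Wset n := by
  refine ⟨fun i => ?_, fun i hi => ?_⟩
  · rw [Equiv.Perm.inv_eq_iff_eq, hx.1]; simp
  · rw [Equiv.Perm.inv_eq_iff_eq, hx.2 i hi]

theorem Wset_one (n : ℕ) : (1 : P) ∈ Wset n := by simp [Wset]

theorem Wset_sgen {n i : ℕ} (hi : 1 ≤ i) (hn : i + 1 ≤ n) : sgen i ∈ Wset n := by
  refine ⟨fun a => ?_, fun a ha => ?_⟩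
  · rw [sgen_apply i hi, sgen_apply i hi]; split_ifs <;> omega
  · rw [sgen_apply i hi]
    have : (i : ℤ) + 1 ≤ n := by exact_mod_cast hn
    rcases abs_cases a with h | h <;> split_ifs <;> omega

theorem Wset_ttgen {n i : ℕ} (hi : 1 ≤ i) (hn : i ≤ n) : ttgen i ∈ Wset n := by
  refine ⟨fun a => ?_, fun a ha => ?_⟩
  · rw [ttgen_apply i hi, ttgen_apply i hi]; split_ifs <;> omega
  · rw [ttgen_apply i hi]
    rcases abs_cases a with h | h <;> split_ifs <;> omega

theorem Wset_zero {n : ℕ} {x : P} (hx : x ∈ Wset n) : x 0 = 0 := by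
  have := hx.1 0
  simp at this; omega

theorem Wset_ne {n : ℕ} {x : P} (hx : x ∈ Wset n) {a : ℤ} (ha : a ≠ 0) : x a ≠ 0 := by
  intro h
  rw [← Wset_zero hx] at h
  exact ha (x.injective h)

theorem Wset_bound {n : ℕ} {x : P} (hx : x ∈ Wset n) {a : ℤ} (ha : |a| ≤ n) : |x a| ≤ n := by
  by_contra h
  push Not at h
  have := hx.2 _ h
  have := x.injective this
  rw [this] at h; omega

/-- contribution of a pair to the length -/
def trm (f : ℤ → ℤ) (a b : ℤ) : ℕ :=
  if a < b then (if f b < f a then 1 else 0) + (if f a + f b < 0 then 1 else 0)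
  else if a = b then (if f a < 0 then 1 else 0) else 0

noncomputable def idx (n : ℕ) : Finset (ℤ × ℤ) := Finset.Icc (1 : ℤ) n ×ˢ Finset.Icc (1 : ℤ) n

/-- the length statistic -/
noncomputable def NN (n : ℕ) (f : ℤ → ℤ) : ℕ := ∑ p ∈ idx n, trm f p.1 p.2

/-- contribution of a pair, in terms of the values -/
def tr (a b u v : ℤ) : ℕ :=
  if a < b then (if v < u then 1 else 0) + (if u + v < 0 then 1 else 0)
  else if a = b then (if u < 0 then 1 else 0) else 0

theorem trm_eq (f : ℤ → ℤ) (a b : ℤ) : trm f a b = tr a b (f a) (f b) := rfl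

theorem NN_s (n i : ℕ) (hi : 1 ≤ i) (hn : i + 1 ≤ n) (f : ℤ → ℤ) (h : f i < f (i + 1)) :
    NN n (f ∘ sgen i) = NN n f + 1 := by
  have hn' : (i : ℤ) + 1 ≤ n := by exact_mod_cast hn
  have hi' : (1 : ℤ) ≤ i := by exact_mod_cast hi
  have e : NN n (f ∘ sgen i) = ∑ p ∈ idx n, trm (f ∘ sgen i) (sgen i p.1) (sgen i p.2) := by
    unfold NN
    refine (Finset.sum_equiv ((sgen i).prodCongr (sgen i)) ?_ ?_).symm
    · rintro ⟨a, b⟩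
      simp only [idx, Finset.mem_product, Finset.mem_Icc, Equiv.prodCongr_apply, Prod.map,
        sgen_apply i hi]
      split_ifs <;> omega
    · intro p _; rfl
  rw [e]
  have key : ∀ p ∈ idx n, trm (f ∘ sgen i) (sgen i p.1) (sgen i p.2) +
      (if ((i : ℤ), (i : ℤ) + 1) = p then (if f i + f (i + 1) < 0 then 1 else 0) else 0) =
      trm f p.1 p.2 +
      (if ((i : ℤ) + 1, (i : ℤ)) = p then (if f i + f (i + 1) < 0 then 1 else 0) + 1 else 0) := by
    rintro ⟨a, b⟩ hp
    simp only [idx, Finset.mem_product, Finset.mem_Icc] at hp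
    simp only [trm, Function.comp_apply, sgen_invol i hi, Prod.mk.injEq]
    have cmp : (a = i ∧ b = i + 1) ∨ (a = i + 1 ∧ b = i) ∨
        (¬ ((i : ℤ) = a ∧ (i : ℤ) + 1 = b) ∧ ¬ ((i : ℤ) + 1 = a ∧ (i : ℤ) = b) ∧
        (sgen i a < sgen i b ↔ a < b) ∧ (sgen i a = sgen i b ↔ a = b)) := by
      rw [sgen_apply i hi a, sgen_apply i hi b]
      by_cases a1 : a = i <;> by_cases a2 : a = i + 1 <;> by_cases b1 : b = i <;>
        by_cases b2 : b = i + 1 <;> (try subst a1) <;> (try subst a2) <;> (try subst b1) <;>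
        (try subst b2) <;> split_ifs <;> omega
    rcases cmp with ⟨rfl, rfl⟩ | ⟨rfl, rfl⟩ | ⟨c1, c2, c3, c4⟩
    · have h1 : sgen i (i : ℤ) = i + 1 := by simp [sgen_apply i hi]
      have h2 : sgen i ((i : ℤ) + 1) = i := by simp [sgen_apply i hi]
      rw [h1, h2]
      have : ¬ f (i + 1) < f i := by omega
      simp [this]
    · have h1 : sgen i (i : ℤ) = i + 1 := by simp [sgen_apply i hi]
      have h2 : sgen i ((i : ℤ) + 1) = i := by simp [sgen_apply i hi]
      rw [h1, h2, add_comm (f (i + 1)) (f i)]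
      simp [h, add_comm]
    · simp [c1, c2, c3, c4]
  have := Finset.sum_congr rfl key
  rw [Finset.sum_add_distrib, Finset.sum_add_distrib, Finset.sum_ite_eq, Finset.sum_ite_eq] at this
  have m1 : ((i : ℤ), (i : ℤ) + 1) ∈ idx n := by simp [idx]; omega
  have m2 : ((i : ℤ) + 1, (i : ℤ)) ∈ idx n := by simp [idx]; omega
  simp only [m1, m2, if_true] at this
  unfold NN
  omega

theorem NN_t (n i : ℕ) (hi : 1 ≤ i) (hn : i ≤ n) (f : ℤ → ℤ) (h : f i < 0)
    (hneg : f (-i) = - f i) : NN n (f ∘ ttgen i) < NN n f := by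
  unfold NN
  have hn' : (i : ℤ) ≤ n := by exact_mod_cast hn
  have hi' : (1 : ℤ) ≤ i := by exact_mod_cast hi
  have hif : ttgen i (i : ℤ) = -i := by simp [ttgen_apply i hi]
  have ho : ∀ a : ℤ, 1 ≤ a → a ≠ i → ttgen i a = a := by
    intro a ha hai
    rw [ttgen_apply i hi]; split_ifs <;> omega
  apply Finset.sum_lt_sum
  · rintro ⟨a, b⟩ hp
    simp only [idx, Finset.mem_product, Finset.mem_Icc] at hp
    simp only [trm_eq, Function.comp_apply]
    by_cases a1 : a = i
    · subst a1
      by_cases b1 : b = i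
      · subst b1
        rw [hif, hneg]; simp only [tr]; split_ifs <;> omega
      · rw [hif, hneg, ho b hp.2.1 b1]; simp only [tr]; split_ifs <;> omega
    · by_cases b1 : b = i
      · subst b1
        rw [hif, hneg, ho a hp.1.1 a1]; simp only [tr]; split_ifs <;> omega
      · rw [ho a hp.1.1 a1, ho b hp.2.1 b1]
  · refine ⟨((i : ℤ), (i : ℤ)), by simp [idx]; omega, ?_⟩
    simp only [trm, Function.comp_apply, hif, hneg]
    split_ifs <;> omega

theorem NN_t1 (n : ℕ) (hn : 1 ≤ n) (f : ℤ → ℤ) (h : f 1 < 0)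
    (hneg : f (-1) = - f 1) : NN n f = NN n (f ∘ ttgen 1) + 1 := by
  have hn' : (1 : ℤ) ≤ n := by exact_mod_cast hn
  have hif : ttgen 1 (1 : ℤ) = -1 := by simp [ttgen_apply 1 le_rfl]
  have ho : ∀ a : ℤ, 1 ≤ a → a ≠ 1 → ttgen 1 a = a := by
    intro a ha hai
    rw [ttgen_apply 1 le_rfl]; split_ifs <;> omega
  have key : ∀ p ∈ idx n, trm f p.1 p.2 = trm (f ∘ ttgen 1) p.1 p.2 +
      (if ((1 : ℤ), (1 : ℤ)) = p then 1 else 0) := by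
    rintro ⟨a, b⟩ hp
    simp only [idx, Finset.mem_product, Finset.mem_Icc] at hp
    simp only [trm_eq, Function.comp_apply, Prod.mk.injEq]
    by_cases a1 : a = 1
    · subst a1
      by_cases b1 : b = 1
      · subst b1
        rw [hif, hneg]
        simp [tr, h, h.le]
      · rw [hif, hneg, ho b hp.2.1 b1]; simp only [tr]; split_ifs <;> omega
    · have : ¬ (1 = a ∧ 1 = b) := by omega
      rw [if_neg this]
      by_cases b1 : b = 1
      · subst b1
        rw [hif, hneg, ho a hp.1.1 a1]; simp only [tr]; split_ifs <;> omega
      · rw [ho a hp.1.1 a1, ho b hp.2.1 b1]; rfl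
  unfold NN
  rw [Finset.sum_congr rfl key, Finset.sum_add_distrib, Finset.sum_ite_eq]
  have m1 : ((1 : ℤ), (1 : ℤ)) ∈ idx n := by simp [idx]; omega
  simp [m1]

theorem inv_sgen_mul (i : ℕ) (hi : 1 ≤ i) (x : P) : ⇑(sgen i * x)⁻¹ = ⇑x⁻¹ ∘ sgen i := by
  rw [mul_inv_rev, sgen_inv i hi]; rfl

theorem inv_ttgen_mul (i : ℕ) (x : P) : ⇑(ttgen i * x)⁻¹ = ⇑x⁻¹ ∘ ttgen i := by
  rw [mul_inv_rev, ttgen_inv i]; rfl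

theorem sgen_mul_mul (i : ℕ) (hi : 1 ≤ i) (x : P) : sgen i * (sgen i * x) = x := by
  ext a; simp [sgen_invol i hi]

theorem ttgen_mul_mul (i : ℕ) (x : P) : ttgen i * (ttgen i * x) = x := by
  simp [ttgen, ← mul_assoc]

/-- the number `NN` of `x⁻¹` -/
noncomputable def NI (n : ℕ) (x : P) : ℕ := NN n (⇑x⁻¹)

theorem NI_s_up {n i : ℕ} (hi : 1 ≤ i) (hn : i + 1 ≤ n) (x : P) (h : x⁻¹ i < x⁻¹ (i + 1)) :
    NI n (sgen i * x) = NI n x + 1 := by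
  unfold NI; rw [inv_sgen_mul i hi]; exact NN_s n i hi hn _ h

theorem sgen_i (i : ℕ) (hi : 1 ≤ i) : sgen i (i : ℤ) = i + 1 := by simp [sgen_apply i hi]
theorem sgen_i1 (i : ℕ) (hi : 1 ≤ i) : sgen i ((i : ℤ) + 1) = i := by simp [sgen_apply i hi]

theorem NI_s_down {n i : ℕ} (hi : 1 ≤ i) (hn : i + 1 ≤ n) (x : P) (h : x⁻¹ (i + 1) < x⁻¹ i) :
    NI n x = NI n (sgen i * x) + 1 := by
  have := NI_s_up hi hn (sgen i * x) (by
    rw [inv_sgen_mul i hi]; simp only [Function.comp_apply, sgen_i i hi, sgen_i1 i hi]; exact h)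
  rw [sgen_mul_mul i hi] at this; exact this

theorem NI_t {n i : ℕ} (hi : 1 ≤ i) (hn : i ≤ n) (x : P) (hx : x ∈ Wset n) (h : x⁻¹ i < 0) :
    NI n (ttgen i * x) < NI n x := by
  unfold NI; rw [inv_ttgen_mul]
  exact NN_t n i hi hn _ h ((Wset_inv hx).1 _)

theorem NI_t' {n i : ℕ} (hi : 1 ≤ i) (hn : i ≤ n) (x : P) (hx : x ∈ Wset n) (h : 0 < x⁻¹ i) :
    NI n x < NI n (ttgen i * x) := by
  have := NI_t hi hn (ttgen i * x) (Wset_mul (Wset_ttgen hi hn) hx) (by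
    rw [inv_ttgen_mul]; simp only [Function.comp_apply, ttgen_apply i hi, if_true]
    rw [(Wset_inv hx).1]; omega)
  rwa [ttgen_mul_mul] at this

theorem NI_t1 {n : ℕ} (hn : 1 ≤ n) (x : P) (hx : x ∈ Wset n) (h : x⁻¹ 1 < 0) :
    NI n x = NI n (ttgen 1 * x) + 1 := by
  unfold NI; rw [inv_ttgen_mul]
  exact NN_t1 n hn _ h ((Wset_inv hx).1 _)

theorem NI_t1' {n : ℕ} (hn : 1 ≤ n) (x : P) (hx : x ∈ Wset n) (h : 0 < x⁻¹ 1) :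
    NI n (ttgen 1 * x) = NI n x + 1 := by
  have := NI_t1 hn (ttgen 1 * x) (Wset_mul (Wset_ttgen le_rfl hn) hx) (by
    rw [inv_ttgen_mul]
    simp only [Function.comp_apply, ttgen_apply 1 le_rfl, Nat.cast_one, if_true]
    rw [(Wset_inv hx).1]; omega)
  rwa [ttgen_mul_mul] at this

theorem Sset_cases {n : ℕ} (hn : 1 ≤ n) {g : P} (hg : g ∈ Sset n) :
    g = ttgen 1 ∨ ∃ i, 1 ≤ i ∧ i + 1 ≤ n ∧ g = sgen i := by
  rcases hg with h | ⟨i, ⟨h1, h2⟩, h3⟩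
  · left; rw [h, tgen_eq]
  · right; exact ⟨i, h1, by omega, h3.symm⟩

theorem Sset_mem {n : ℕ} (hn : 1 ≤ n) {g : P} (hg : g ∈ Sset n) : g ∈ Wset n := by
  rcases Sset_cases hn hg with rfl | ⟨i, h1, h2, rfl⟩
  · exact Wset_ttgen le_rfl hn
  · exact Wset_sgen h1 h2

theorem NI_le {n : ℕ} (hn : 1 ≤ n) {g x : P} (hg : g ∈ Sset n) (hx : x ∈ Wset n) :
    NI n (g * x) ≤ NI n x + 1 := by
  rcases Sset_cases hn hg with rfl | ⟨i, h1, h2, rfl⟩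
  · have : x⁻¹ 1 ≠ 0 := Wset_ne (Wset_inv hx) (by norm_num)
    rcases lt_or_gt_of_ne this with h | h
    · have := NI_t1 hn x hx h; omega
    · have := NI_t1' hn x hx h; omega
  · have : x⁻¹ (i : ℤ) ≠ x⁻¹ (i + 1) := fun h => by
      have := x⁻¹.injective h; omega
    rcases lt_or_gt_of_ne this with h | h
    · have := NI_s_up h1 h2 x h; omega
    · have := NI_s_down h1 h2 x h; omega

theorem NI_one (n : ℕ) : NI n 1 = 0 := by
  unfold NI NN
  apply Finset.sum_eq_zero
  rintro ⟨a, b⟩ hp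
  simp only [idx, Finset.mem_product, Finset.mem_Icc] at hp
  simp only [trm, inv_one, Equiv.Perm.coe_one, id]
  split_ifs <;> omega

theorem NI_prod {n : ℕ} (hn : 1 ≤ n) (l : List P) (hl : ∀ g ∈ l, g ∈ Sset n) :
    l.prod ∈ Wset n ∧ NI n l.prod ≤ l.length := by
  induction l with
  | nil => simp [NI_one, Wset_one]
  | cons g l ih =>
    obtain ⟨h1, h2⟩ := ih (fun g' h => hl g' (by simp [h]))
    have hg := hl g (by simp)
    have := NI_le hn hg h1
    rw [List.prod_cons, List.length_cons]
    exact ⟨Wset_mul (Sset_mem hn hg) h1, by omega⟩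

theorem eq_one {n : ℕ} {x : P} (hx : x ∈ Wset n) (h : ∀ i : ℕ, 1 ≤ i → i ≤ n → x i = i) :
    x = 1 := by
  ext a
  simp only [Equiv.Perm.coe_one, id]
  have pos : ∀ a : ℤ, 0 ≤ a → x a = a := by
    intro a ha
    lift a to ℕ using ha
    by_cases h0 : a = 0
    · subst h0; simpa using Wset_zero hx
    · by_cases h1 : a ≤ n
      · exact h a (by omega) h1
      · exact hx.2 _ (by rw [Nat.abs_cast]; exact_mod_cast Nat.lt_of_not_le h1)
  by_cases ha : 0 ≤ a
  · exact pos a ha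
  · have := pos (-a) (by omega)
    rw [hx.1] at this; omega

theorem exists_down {n : ℕ} (hn : 1 ≤ n) {x : P} (hx : x ∈ Wset n) (h1 : x ≠ 1) :
    ∃ g ∈ Sset n, g * (g * x) = x ∧ NI n x = NI n (g * x) + 1 := by
  by_contra hcon
  push Not at hcon
  have ht : 0 < x⁻¹ 1 := by
    have h0 : x⁻¹ 1 ≠ 0 := Wset_ne (Wset_inv hx) (by norm_num)
    by_contra h
    exact hcon (ttgen 1) (by rw [← tgen_eq]; exact Set.mem_insert _ _) (ttgen_mul_mul _ _)
      (NI_t1 hn x hx (by omega))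
  have hs : ∀ i : ℕ, 1 ≤ i → i + 1 ≤ n → x⁻¹ i < x⁻¹ (i + 1) := by
    intro i hi hin
    have : x⁻¹ (i : ℤ) ≠ x⁻¹ (i + 1) := fun h => by
      have := x⁻¹.injective h; omega
    by_contra h
    exact hcon (sgen i) (Set.mem_insert_of_mem _ ⟨i, ⟨hi, by omega⟩, rfl⟩) (sgen_mul_mul _ hi _)
      (NI_s_down hi hin x (by omega))
  have lo : ∀ i : ℕ, 1 ≤ i → i ≤ n → (i : ℤ) ≤ x⁻¹ i := by
    intro i hi
    induction i, hi using Nat.le_induction with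
    | base => intro _; push_cast; omega
    | succ i hi ih =>
      intro h
      have a1 := ih (by omega)
      have a2 := hs i hi h
      push_cast; omega
  have hi : ∀ k : ℕ, k < n → x⁻¹ ((n - k : ℕ) : ℤ) ≤ n - k := by
    intro k
    induction k with
    | zero =>
      intro _
      have := Wset_bound (Wset_inv hx) (a := n) (by simp)
      have := le_abs_self (x⁻¹ (n : ℤ))
      simp only [Nat.sub_zero, Nat.cast_zero, sub_zero]; omega
    | succ k ih =>
      intro h
      have a1 := ih (by omega)
      have a2 := hs (n - (k + 1)) (by omega) (by omega)
      have e : (((n - (k + 1) : ℕ) : ℤ) + 1) = ((n - k : ℕ) : ℤ) := by omega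
      rw [e] at a2
      push_cast; omega
  have := eq_one (Wset_inv hx) (fun i h1 h2 => by
    have a1 := lo i h1 h2
    have a2 := hi (n - i) (by omega)
    have e : n - (n - i) = i := by omega
    rw [e] at a2
    omega)
  exact h1 (by simpa using this)

theorem exists_word {n : ℕ} (hn : 1 ≤ n) (k : ℕ) : ∀ x ∈ Wset n, NI n x = k →
    ∃ l : List P, (∀ g ∈ l, g ∈ Sset n) ∧ l.prod = x ∧ l.length = k := by
  induction k with
  | zero =>
    intro x hx hk
    by_cases h : x = 1
    · exact ⟨[], by simp, by simp [h], rfl⟩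
    · obtain ⟨g, _, _, h⟩ := exists_down hn hx h
      omega
  | succ k ih =>
    intro x hx hk
    by_cases h : x = 1
    · rw [h, NI_one] at hk; omega
    · obtain ⟨g, hg, hgg, h⟩ := exists_down hn hx h
      obtain ⟨l, l1, l2, l3⟩ := ih (g * x) (Wset_mul (Sset_mem hn hg) hx) (by omega)
      refine ⟨g :: l, ?_, ?_, ?_⟩
      · intro g' hg'
        rcases List.mem_cons.1 hg' with rfl | h'
        · exact hg
        · exact l1 _ h'
      · rw [List.prod_cons, l2, hgg]
      · simp [l3]

theorem len_eq {n : ℕ} (hn : 1 ≤ n) {x : P} (hx : x ∈ Wset n) : len n x = NI n x := by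
  unfold len
  apply le_antisymm
  · exact Nat.sInf_le (exists_word hn _ x hx rfl)
  · obtain ⟨l, l1, l2, l3⟩ := Nat.sInf_mem (s := {k | ∃ l : List P, (∀ g ∈ l, g ∈ Sset n) ∧
      l.prod = x ∧ l.length = k}) ⟨_, exists_word hn _ x hx rfl⟩
    rw [← l3]
    have := (NI_prod hn l l1).2
    rwa [l2] at this

theorem desc_s {n i : ℕ} (hi : 1 ≤ i) (hn : i + 1 ≤ n) {x : P} (hx : x ∈ Wset n) :
    len n (sgen i * x) < len n x ↔ x⁻¹ (i + 1) < x⁻¹ i := by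
  rw [len_eq (by omega) hx, len_eq (by omega) (Wset_mul (Wset_sgen hi hn) hx)]
  have : x⁻¹ (i : ℤ) ≠ x⁻¹ (i + 1) := fun h => by
      have := x⁻¹.injective h; omega
  rcases lt_or_gt_of_ne this with h | h
  · have := NI_s_up hi hn x h; omega
  · have := NI_s_down hi hn x h; omega

theorem asc_s {n i : ℕ} (hi : 1 ≤ i) (hn : i + 1 ≤ n) {x : P} (hx : x ∈ Wset n) :
    len n x < len n (sgen i * x) ↔ x⁻¹ i < x⁻¹ (i + 1) := by
  rw [len_eq (by omega) hx, len_eq (by omega) (Wset_mul (Wset_sgen hi hn) hx)]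
  have : x⁻¹ (i : ℤ) ≠ x⁻¹ (i + 1) := fun h => by
      have := x⁻¹.injective h; omega
  rcases lt_or_gt_of_ne this with h | h
  · have := NI_s_up hi hn x h; omega
  · have := NI_s_down hi hn x h; omega

theorem desc_t {n i : ℕ} (hi : 1 ≤ i) (hn : i ≤ n) {x : P} (hx : x ∈ Wset n) :
    len n (ttgen i * x) < len n x ↔ x⁻¹ i < 0 := by
  rw [len_eq (by omega) hx, len_eq (by omega) (Wset_mul (Wset_ttgen hi hn) hx)]
  have : x⁻¹ (i : ℤ) ≠ 0 := Wset_ne (Wset_inv hx) (by omega)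
  rcases lt_or_gt_of_ne this with h | h
  · have := NI_t hi hn x hx h; omega
  · have := NI_t' hi hn x hx h; omega

/-- `x —s_i→ s_i x` in terms of `f = x⁻¹`. -/
theorem knuthStep_iff {n : ℕ} {x y : P} (hx : x ∈ Wset n) : knuthStep n x y ↔
    ∃ i : ℕ, 1 ≤ i ∧ i + 1 ≤ n ∧ y = sgen i * x ∧ x⁻¹ i < x⁻¹ (i + 1) ∧
    ((x⁻¹ i < 0 ∧ 0 < x⁻¹ (i + 1)) ∨
     (i + 2 ≤ n ∧ x⁻¹ i < x⁻¹ (i + 2) ∧ x⁻¹ (i + 2) < x⁻¹ (i + 1)) ∨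
     (2 ≤ i ∧ x⁻¹ i < x⁻¹ (i - 1) ∧ x⁻¹ (i - 1) < x⁻¹ (i + 1))) := by
  constructor
  · rintro ⟨i, ⟨hi, hi2⟩, rfl, hl, hd⟩
    have hin : i + 1 ≤ n := by omega
    have hy := Wset_mul (Wset_sgen hi hin) hx
    refine ⟨i, hi, hin, rfl, (asc_s hi hin hx).1 hl, ?_⟩
    have hl' := (asc_s hi hin hx).1 hl
    rw [Set.not_subset] at hd
    obtain ⟨u, ⟨hu, hux⟩, huy⟩ := hd
    have huy' : ¬ len n (u * (sgen i * x)) < len n (sgen i * x) := fun h => huy ⟨hu, h⟩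
    have ht : ∀ j : ℕ, 1 ≤ j → j ≤ n → u = ttgen j → x⁻¹ i < 0 ∧ 0 < x⁻¹ (i + 1) := by
      rintro j hj hjn rfl
      rw [desc_t hj hjn hx] at hux
      rw [desc_t hj hjn hy, inv_sgen_mul i hi] at huy'
      rw [Function.comp_apply] at huy'
      have h0 : x⁻¹ ((i : ℤ) + 1) ≠ 0 := Wset_ne (Wset_inv hx) (by omega)
      by_cases j1 : j = i
      · subst j1
        rw [sgen_i j hi] at huy'
        omega
      · by_cases j2 : j = i + 1
        · subst j2
          rw [Nat.cast_add, Nat.cast_one] at huy' hux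
          rw [sgen_i1 i hi] at huy'
          omega
        · have e1 : ¬ (j : ℤ) = i := by omega
          have e2 : ¬ (j : ℤ) = i + 1 := by omega
          have e3 : ¬ (j : ℤ) = -i := by omega
          have e4 : ¬ (j : ℤ) = -(i + 1) := by omega
          rw [sgen_apply i hi] at huy'
          simp only [e1, e2, e3, e4, if_false] at huy'
          omega
    rcases hu with hu | ⟨j, ⟨hj, hjn⟩, rfl⟩
    · rcases Sset_cases (by omega) hu with h | ⟨j, hj, hjn, rfl⟩
      · exact Or.inl (ht 1 le_rfl (by omega) h)
      · rw [desc_s hj hjn hx] at hux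
        rw [desc_s hj hjn hy, inv_sgen_mul i hi] at huy'
        simp only [Function.comp_apply] at huy'
        rw [sgen_apply i hi, sgen_apply i hi] at huy'
        right
        by_cases j1 : j = i
        · subst j1; omega
        · by_cases j2 : j = i + 1
          · subst j2
            left
            have e1 : ¬ (((i + 1 : ℕ) : ℤ) + 1 = i) := by omega
            have e2 : ¬ (((i + 1 : ℕ) : ℤ) + 1 = i + 1) := by omega
            have e3 : ¬ (((i + 1 : ℕ) : ℤ) + 1 = -i) := by omega
            have e4 : ¬ (((i + 1 : ℕ) : ℤ) + 1 = -(i + 1)) := by omega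
            have e5 : ¬ (((i + 1 : ℕ) : ℤ) = i) := by omega
            have e6 : (((i + 1 : ℕ) : ℤ) = i + 1) := by omega
            have e7 : ((i : ℤ) + 1 + 1) = i + 2 := by omega
            simp only [e1, e2, e3, e4, e5, if_false] at huy'
            rw [if_pos e6] at huy'
            rw [e6, e7] at huy' hux
            have : x⁻¹ (i : ℤ) ≠ x⁻¹ (i + 2) := fun h => by
              have := x⁻¹.injective h; omega
            exact ⟨by omega, by omega, by omega⟩
          · by_cases j3 : j + 1 = i
            · right
              have hj' : (j : ℤ) = i - 1 := by omega
              have e1 : ¬ ((j : ℤ) = i) := by omega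
              have e2 : ¬ ((j : ℤ) = i + 1) := by omega
              have e3 : ¬ ((j : ℤ) = -i) := by omega
              have e4 : ¬ ((j : ℤ) = -(i + 1)) := by omega
              have e5 : (j : ℤ) + 1 = i := by omega
              simp only [e1, e2, e3, e4, if_false, e5, if_true] at huy'
              rw [e5] at hux
              rw [hj'] at huy' hux
              have : x⁻¹ ((i : ℤ) - 1) ≠ x⁻¹ (i + 1) := fun h => by
                have := x⁻¹.injective h; omega
              exact ⟨by omega, by omega, by omega⟩
            · have e1 : ¬ ((j : ℤ) = i) := by omega
              have e2 : ¬ ((j : ℤ) = i + 1) := by omega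
              have e3 : ¬ ((j : ℤ) = -i) := by omega
              have e4 : ¬ ((j : ℤ) = -(i + 1)) := by omega
              have f1 : ¬ ((j : ℤ) + 1 = i) := by omega
              have f2 : ¬ ((j : ℤ) + 1 = i + 1) := by omega
              have f3 : ¬ ((j : ℤ) + 1 = -i) := by omega
              have f4 : ¬ ((j : ℤ) + 1 = -(i + 1)) := by omega
              simp only [e1, e2, e3, e4, f1, f2, f3, f4, if_false] at huy'
              exact absurd hux huy'
    · exact Or.inl (ht j hj hjn rfl)
  · rintro ⟨i, hi, hin, rfl, hl, hc⟩
    have hy := Wset_mul (Wset_sgen hi hin) hx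
    refine ⟨i, ⟨hi, by omega⟩, rfl, (asc_s hi hin hx).2 hl, ?_⟩
    rw [Set.not_subset]
    rcases hc with ⟨h1, h2⟩ | ⟨h1, h2, h3⟩ | ⟨h1, h2, h3⟩
    · refine ⟨ttgen i, ⟨Or.inr ⟨i, ⟨hi, by omega⟩, rfl⟩, (desc_t hi (by omega) hx).2 h1⟩, ?_⟩
      rintro ⟨-, h⟩
      rw [desc_t hi (by omega) hy, inv_sgen_mul i hi, Function.comp_apply, sgen_i i hi] at h
      omega
    · refine ⟨sgen (i + 1), ⟨Or.inl (Set.mem_insert_of_mem _ ⟨i + 1, ⟨by omega, by omega⟩, rfl⟩),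
        (desc_s (by omega) (by omega) hx).2 ?_⟩, ?_⟩
      · push_cast
        have e7 : ((i : ℤ) + 1 + 1) = i + 2 := by omega
        rw [e7]; exact h3
      · rintro ⟨-, h⟩
        rw [desc_s (by omega) (by omega) hy, inv_sgen_mul i hi, Function.comp_apply,
          Function.comp_apply] at h
        have e7 : (((i + 1 : ℕ) : ℤ) + 1) = i + 2 := by omega
        have e8 : ((i + 1 : ℕ) : ℤ) = i + 1 := by omega
        have e9 : sgen i ((i : ℤ) + 2) = i + 2 := by
          rw [sgen_apply i hi]; split_ifs <;> omega
        rw [e7, e8, e9, sgen_i1 i hi] at h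
        omega
    · have e1 : ((i - 1 : ℕ) : ℤ) = i - 1 := by omega
      have e2 : ((i - 1 : ℕ) : ℤ) + 1 = i := by omega
      refine ⟨sgen (i - 1), ⟨Or.inl (Set.mem_insert_of_mem _ ⟨i - 1, ⟨by omega, by omega⟩, rfl⟩),
        (desc_s (by omega) (by omega) hx).2 ?_⟩, ?_⟩
      · rw [e2, e1]; exact h2
      · rintro ⟨-, h⟩
        rw [desc_s (by omega) (by omega) hy, inv_sgen_mul i hi, Function.comp_apply,
          Function.comp_apply] at h
        have e9 : sgen i ((i : ℤ) - 1) = i - 1 := by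
          rw [sgen_apply i hi]; split_ifs <;> omega
        rw [e2, e1, e9, sgen_i i hi] at h
        omega

end RSK

/-! ### Signed words -/

namespace RSK

/-- absolute values of the positive letters -/
def posP (L : List ℤ) : List ℕ := L.filterMap (fun a => if 0 < a then some a.natAbs else none)

/-- absolute values of the negative letters -/
def negP (L : List ℤ) : List ℕ := L.filterMap (fun a => if a < 0 then some a.natAbs else none)

theorem posP_append (L M : List ℤ) : posP (L ++ M) = posP L ++ posP M := List.filterMap_append
theorem negP_append (L M : List ℤ) : negP (L ++ M) = negP L ++ negP M := List.filterMap_append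

theorem posP_cons_pos {a : ℤ} (h : 0 < a) (L : List ℤ) : posP (a :: L) = a.natAbs :: posP L := by
  simp [posP, h]
theorem posP_cons_neg {a : ℤ} (h : ¬ 0 < a) (L : List ℤ) : posP (a :: L) = posP L := by
  simp [posP, h]
theorem negP_cons_neg {a : ℤ} (h : a < 0) (L : List ℤ) : negP (a :: L) = a.natAbs :: negP L := by
  simp [negP, h]
theorem negP_cons_pos {a : ℤ} (h : ¬ a < 0) (L : List ℤ) : negP (a :: L) = negP L := by
  simp [negP, h]

/-- elementary moves on signed words -/
inductive KS : List ℤ → List ℤ → Prop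
  | opp (p s : List ℤ) (a b : ℤ) : a < 0 → 0 < b → KS (p ++ a :: b :: s) (p ++ b :: a :: s)
  | k1 (p s : List ℤ) (x y z : ℤ) : x < y → y < z →
      KS (p ++ x :: z :: y :: s) (p ++ z :: x :: y :: s)
  | k2 (p s : List ℤ) (x y z : ℤ) : x < y → y < z →
      KS (p ++ y :: x :: z :: s) (p ++ y :: z :: x :: s)

theorem KS.pos {L M : List ℤ} (h : KS L M) : KE (posP L) (posP M) := by
  cases h with
  | opp p s a b h1 h2 =>
    have h1' : ¬ 0 < a := by omega
    rw [posP_append, posP_append, posP_cons_neg h1', posP_cons_pos h2, posP_cons_pos h2,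
      posP_cons_neg h1']
    exact .refl _
  | k1 p s x y z h1 h2 =>
    rw [posP_append, posP_append]
    by_cases hx : 0 < x
    · have hy : 0 < y := by omega
      have hz : 0 < z := by omega
      simp only [posP_cons_pos hx, posP_cons_pos hy, posP_cons_pos hz]
      exact .rel _ _ (KN.k1 _ _ _ _ _ (by omega) (by omega))
    · by_cases hz : 0 < z
      · simp only [posP_cons_neg hx, posP_cons_pos hz]
        exact .refl _
      · simp only [posP_cons_neg hx, posP_cons_neg hz]
        exact .refl _
  | k2 p s x y z h1 h2 =>
    rw [posP_append, posP_append]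
    by_cases hx : 0 < x
    · have hy : 0 < y := by omega
      have hz : 0 < z := by omega
      simp only [posP_cons_pos hx, posP_cons_pos hy, posP_cons_pos hz]
      exact .rel _ _ (KN.k2 _ _ _ _ _ (by omega) (by omega))
    · have e : posP (y :: x :: z :: s) = posP (y :: z :: x :: s) := by
        by_cases hy : 0 < y <;> by_cases hz : 0 < z <;> simp [posP, hx, hy, hz]
      rw [e]; exact .refl _

theorem KS.neg {L M : List ℤ} (h : KS L M) : KE (negP L) (negP M) := by
  cases h with
  | opp p s a b h1 h2 =>
    have h2' : ¬ b < 0 := by omega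
    rw [negP_append, negP_append, negP_cons_neg h1, negP_cons_pos h2', negP_cons_pos h2',
      negP_cons_neg h1]
    exact .refl _
  | k1 p s x y z h1 h2 =>
    rw [negP_append, negP_append]
    by_cases hz : z < 0
    · have hy : y < 0 := by omega
      have hx : x < 0 := by omega
      simp only [negP_cons_neg hx, negP_cons_neg hy, negP_cons_neg hz]
      exact .symm _ _ (.rel _ _ (KN.k1 _ _ _ _ _ (by omega) (by omega)))
    · by_cases hx : x < 0
      · simp only [negP_cons_pos hz, negP_cons_neg hx]
        exact .refl _
      · simp only [negP_cons_pos hz, negP_cons_pos hx]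
        exact .refl _
  | k2 p s x y z h1 h2 =>
    rw [negP_append, negP_append]
    by_cases hz : z < 0
    · have hy : y < 0 := by omega
      have hx : x < 0 := by omega
      simp only [negP_cons_neg hx, negP_cons_neg hy, negP_cons_neg hz]
      exact .symm _ _ (.rel _ _ (KN.k2 _ _ _ _ _ (by omega) (by omega)))
    · have e : negP (y :: x :: z :: s) = negP (y :: z :: x :: s) := by
        by_cases hy : y < 0 <;> by_cases hx : x < 0 <;> simp [negP, hx, hy, hz]
      rw [e]; exact .refl _

abbrev KSE : List ℤ → List ℤ → Prop := Relation.EqvGen KS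

theorem KN.perm {u v : List ℕ} (h : KN u v) : u.Perm v := by
  cases h with
  | k1 p s x y z h1 h2 => exact List.Perm.append_left _ (List.Perm.swap _ _ _)
  | k2 p s x y z h1 h2 => exact List.Perm.append_left _ ((List.Perm.swap _ _ _).cons _)

theorem KE_lift {u v : List ℕ} (h : KE u v) (p s : List ℤ) : u.Perm v ∧ (u.Nodup →
    KSE (p ++ u.map (fun a : ℕ => (a : ℤ)) ++ s) (p ++ v.map (fun a : ℕ => (a : ℤ)) ++ s) ∧
    KSE (p ++ u.map (fun a : ℕ => -(a : ℤ)) ++ s) (p ++ v.map (fun a : ℕ => -(a : ℤ)) ++ s)) := by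
  induction h with
  | refl => exact ⟨List.Perm.refl _, fun _ => ⟨.refl _, .refl _⟩⟩
  | symm _ _ _ ih =>
    refine ⟨ih.1.symm, fun hn => ?_⟩
    have := ih.2 (ih.1.nodup_iff.2 hn)
    exact ⟨.symm _ _ this.1, .symm _ _ this.2⟩
  | trans _ _ _ _ _ h1 h2 =>
    refine ⟨h1.1.trans h2.1, fun hn => ?_⟩
    have a := h1.2 hn
    have b := h2.2 (h1.1.nodup_iff.1 hn)
    exact ⟨.trans _ _ _ a.1 b.1, .trans _ _ _ a.2 b.2⟩
  | rel u v h =>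
    refine ⟨h.perm, fun hn => ?_⟩
    cases h with
    | k1 p' s' x y z h1 h2 =>
      have hxy : x ≠ y := by
        rintro rfl
        have := (List.nodup_append.1 hn).2.1
        simp at this
      constructor
      · refine .rel _ _ ?_
        have := KS.k1 (p ++ p'.map (fun a : ℕ => (a : ℤ))) (s'.map (fun a : ℕ => (a : ℤ)) ++ s)
          x y z (by omega) (by omega)
        simpa using this
      · refine .symm _ _ (.rel _ _ ?_)
        have := KS.k1 (p ++ p'.map (fun a : ℕ => -(a : ℤ))) (s'.map (fun a : ℕ => -(a : ℤ)) ++ s)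
          (-z) (-y) (-x) (by omega) (by omega)
        simpa using this
    | k2 p' s' x y z h1 h2 =>
      have hyz : y ≠ z := by
        rintro rfl
        have := (List.nodup_append.1 hn).2.1
        simp at this
      constructor
      · refine .rel _ _ ?_
        have := KS.k2 (p ++ p'.map (fun a : ℕ => (a : ℤ))) (s'.map (fun a : ℕ => (a : ℤ)) ++ s)
          x y z (by omega) (by omega)
        simpa using this
      · refine .symm _ _ (.rel _ _ ?_)
        have := KS.k2 (p ++ p'.map (fun a : ℕ => -(a : ℤ))) (s'.map (fun a : ℕ => -(a : ℤ)) ++ s)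
          (-z) (-y) (-x) (by omega) (by omega)
        simpa using this

theorem KSE_move (a : ℤ) (ha : a < 0) (q : List ℤ) (hq : ∀ b ∈ q, 0 < b) (p s : List ℤ) :
    KSE (p ++ a :: (q ++ s)) (p ++ q ++ a :: s) := by
  induction q generalizing p with
  | nil => simpa using Relation.EqvGen.refl _
  | cons b q ih =>
    have h1 : KSE (p ++ a :: b :: (q ++ s)) (p ++ b :: a :: (q ++ s)) :=
      .rel _ _ (KS.opp _ _ _ _ ha (hq b (by simp)))
    have h2 := ih (fun c hc => hq c (by simp [hc])) (p ++ [b])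
    refine .trans _ _ _ h1 ?_
    simpa using h2

theorem KSE_sort (L : List ℤ) (hL : ∀ a ∈ L, a ≠ 0) (p : List ℤ) :
    KSE (p ++ L) (p ++ (posP L).map (fun a : ℕ => (a : ℤ)) ++ (negP L).map (fun a : ℕ => -(a : ℤ))) := by
  induction L generalizing p with
  | nil => simpa [posP, negP] using Relation.EqvGen.refl _
  | cons a L ih =>
    have h0 := hL a (by simp)
    have h2 := ih (fun c hc => hL c (by simp [hc])) (p ++ [a])
    by_cases ha : 0 < a
    · have e : ((a.natAbs : ℕ) : ℤ) = a := by omega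
      rw [posP_cons_pos ha, negP_cons_pos (by omega), List.map_cons, e]
      simpa using h2
    · have ha' : a < 0 := by omega
      have e : -((a.natAbs : ℕ) : ℤ) = a := by omega
      rw [posP_cons_neg ha, negP_cons_neg ha', List.map_cons, e]
      have h3 := KSE_move a ha' ((posP L).map (fun a : ℕ => (a : ℤ))) (by
        intro b hb
        simp only [posP, List.mem_map, List.mem_filterMap] at hb
        obtain ⟨c, ⟨d, hd, hdc⟩, rfl⟩ := hb
        split_ifs at hdc with hpos
        simp at hdc; omega) p ((negP L).map (fun a : ℕ => -(a : ℤ)))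
      refine .trans _ _ _ ?_ h3
      simpa using h2

theorem nodup_posP {L : List ℤ} (h : L.Nodup) : (posP L).Nodup := by
  refine h.filterMap ?_
  intro a b c hc hd
  simp only [Option.mem_def] at hc hd
  split_ifs at hc hd
  simp at hc hd; omega

theorem nodup_negP {L : List ℤ} (h : L.Nodup) : (negP L).Nodup := by
  refine h.filterMap ?_
  intro a b c hc hd
  simp only [Option.mem_def] at hc hd
  split_ifs at hc hd
  simp at hc hd; omega

theorem KSE_iff {L M : List ℤ} (hL : ∀ a ∈ L, a ≠ 0) (hM : ∀ a ∈ M, a ≠ 0) (hn : L.Nodup) :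
    KSE L M ↔ insWord [] (posP L) = insWord [] (posP M) ∧
      insWord [] (negP L) = insWord [] (negP M) := by
  rw [knuth_thm, knuth_thm]
  constructor
  · intro h
    clear hL hM hn
    induction h with
    | rel _ _ h => exact ⟨h.pos, h.neg⟩
    | refl => exact ⟨.refl _, .refl _⟩
    | symm _ _ _ ih => exact ⟨.symm _ _ ih.1, .symm _ _ ih.2⟩
    | trans _ _ _ _ _ h1 h2 => exact ⟨.trans _ _ _ h1.1 h2.1, .trans _ _ _ h1.2 h2.2⟩
  · rintro ⟨h1, h2⟩
    have a1 := KSE_sort L hL []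
    have a2 := KSE_sort M hM []
    have b1 := ((KE_lift h1 [] ((negP L).map (fun a : ℕ => -(a : ℤ)))).2 (nodup_posP hn)).1
    have b2 := ((KE_lift h2 ((posP M).map (fun a : ℕ => (a : ℤ))) []).2 (nodup_negP hn)).2
    simp only [List.nil_append, List.append_nil] at a1 a2 b1 b2
    exact .trans _ _ _ a1 (.trans _ _ _ b1 (.trans _ _ _ b2 (.symm _ _ a2)))

end RSK

/-! ### The word of an element of `W_n` -/

namespace RSK

/-- the word `x⁻¹(1), …, x⁻¹(n)` -/
def word (n : ℕ) (x : P) : List ℤ := (List.range' 1 n).map (fun j : ℕ => x⁻¹ (j : ℤ))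

theorem word_eq (n k m : ℕ) (h : k + m = n) (x : P) : word n x =
    (List.range' 1 k).map (fun j : ℕ => x⁻¹ (j : ℤ)) ++
    (List.range' (1 + k) m).map (fun j : ℕ => x⁻¹ (j : ℤ)) := by
  subst h
  rw [← List.map_append, List.range'_append_1]
  rfl

theorem length_word (n : ℕ) (x : P) : (word n x).length = n := by simp [word]

theorem word_ne (n : ℕ) {x : P} (hx : x ∈ Wset n) : ∀ a ∈ word n x, a ≠ 0 := by
  intro a ha
  simp only [word, List.mem_map, List.mem_range'_1] at ha
  obtain ⟨j, hj, rfl⟩ := ha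
  exact Wset_ne (Wset_inv hx) (by omega)

theorem word_nodup (n : ℕ) (x : P) : (word n x).Nodup := by
  refine List.Nodup.map ?_ List.nodup_range'
  intro a b h
  have := x⁻¹.injective h
  exact_mod_cast this

theorem word_inj {n : ℕ} {x y : P} (hx : x ∈ Wset n) (hy : y ∈ Wset n)
    (h : word n x = word n y) : x = y := by
  have h2 : ∀ i : ℕ, 1 ≤ i → i ≤ n → x⁻¹ (i : ℤ) = y⁻¹ (i : ℤ) := by
    intro i hi hin
    have := List.map_inj_left.1 h i (by rw [List.mem_range'_1]; omega)
    exact this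
  have h3 := eq_one (Wset_mul hx (Wset_inv hy)) (fun i hi hin => by
    rw [Equiv.Perm.mul_apply, ← h2 i hi hin]; simp)
  exact mul_inv_eq_one.1 h3

theorem map_sgen (x : P) (i : ℕ) (hi : 1 ≤ i) (l : List ℕ) (hl : ∀ j ∈ l, j ≠ i ∧ j ≠ i + 1) :
    l.map (fun j : ℕ => (sgen i * x)⁻¹ (j : ℤ)) = l.map (fun j : ℕ => x⁻¹ (j : ℤ)) := by
  apply List.map_congr_left
  intro j hj
  have := hl j hj
  rw [inv_sgen_mul i hi, Function.comp_apply]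
  congr 1
  rw [sgen_apply i hi]
  split_ifs <;> omega

theorem word_split (n i m : ℕ) (hi : 1 ≤ i) (h : i + 1 + m = n) (x : P) :
    word n x = (List.range' 1 (i - 1)).map (fun j : ℕ => x⁻¹ (j : ℤ)) ++
      x⁻¹ (i : ℤ) :: x⁻¹ ((i : ℤ) + 1) ::
        (List.range' (i + 2) m).map (fun j : ℕ => x⁻¹ (j : ℤ)) := by
  rw [word_eq n (i - 1) (m + 2) (by omega), List.range'_succ, List.range'_succ]
  have e1 : 1 + (i - 1) = i := by omega
  rw [e1]
  simp [add_assoc]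

theorem word_sgen (n i m : ℕ) (hi : 1 ≤ i) (h : i + 1 + m = n) (x : P) :
    word n (sgen i * x) = (List.range' 1 (i - 1)).map (fun j : ℕ => x⁻¹ (j : ℤ)) ++
      x⁻¹ ((i : ℤ) + 1) :: x⁻¹ (i : ℤ) ::
        (List.range' (i + 2) m).map (fun j : ℕ => x⁻¹ (j : ℤ)) := by
  rw [word_split n i m hi h, map_sgen x i hi, map_sgen x i hi, inv_sgen_mul i hi,
    Function.comp_apply, Function.comp_apply, sgen_i i hi, sgen_i1 i hi]
  · intro j hj; rw [List.mem_range'_1] at hj; omega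
  · intro j hj; rw [List.mem_range'_1] at hj; omega

theorem word_swap {n : ℕ} {x : P} {p s : List ℤ} {a b : ℤ} (h : word n x = p ++ a :: b :: s) :
    p.length + 2 ≤ n ∧ x⁻¹ ((p.length + 1 : ℕ) : ℤ) = a ∧ x⁻¹ (((p.length + 1 : ℕ) : ℤ) + 1) = b ∧
    word n (sgen (p.length + 1) * x) = p ++ b :: a :: s := by
  have hl : (p ++ a :: b :: s).length = n := by rw [← h, length_word]
  simp only [List.length_append, List.length_cons] at hl
  have e := word_split n (p.length + 1) s.length (by omega) (by omega) x
  rw [word_sgen n (p.length + 1) s.length (by omega) (by omega) x]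
  rw [h] at e
  obtain ⟨e1, e2⟩ := List.append_inj e (by simp)
  simp only [List.cons.injEq] at e2
  obtain ⟨e2, e3, e4⟩ := e2
  refine ⟨by omega, e2.symm, e3.symm, ?_⟩
  rw [← e1, ← e2, ← e3, ← e4]

theorem KS_word {n : ℕ} {x : P} (hx : x ∈ Wset n) {L : List ℤ} (h : KS (word n x) L) :
    ∃ y ∈ Wset n, word n y = L ∧ knuthStep n x y := by
  generalize hw : word n x = w at h
  cases h with
  | opp p s a b h1 h2 =>
    obtain ⟨e1, e2, e3, e4⟩ := word_swap hw
    refine ⟨_, Wset_mul (Wset_sgen (by omega) (by omega)) hx, e4, ?_⟩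
    rw [knuthStep_iff hx]
    exact ⟨_, by omega, by omega, rfl, by omega, Or.inl (by omega)⟩
  | k1 p s a c b h1 h2 =>
    obtain ⟨e1, e2, e3, e4⟩ := word_swap hw
    have hw' : word n x = (p ++ [a]) ++ b :: c :: s := by simpa using hw
    obtain ⟨f1, f2, f3, f4⟩ := word_swap hw'
    refine ⟨_, Wset_mul (Wset_sgen (by omega) (by omega)) hx, e4, ?_⟩
    rw [knuthStep_iff hx]
    have g : ((((p ++ [a]).length + 1 : ℕ) : ℤ) + 1) = ((p.length + 1 : ℕ) : ℤ) + 2 := by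
      simp; ring
    rw [g] at f3
    simp only [List.length_append, List.length_cons, List.length_nil] at f1
    exact ⟨_, by omega, by omega, rfl, by omega, Or.inr (Or.inl ⟨by omega, by omega, by omega⟩)⟩
  | k2 p s a c b h1 h2 =>
    obtain ⟨e1, e2, e3, e4⟩ := word_swap hw
    have hw' : word n x = (p ++ [c]) ++ a :: b :: s := by simpa using hw
    obtain ⟨f1, f2, f3, f4⟩ := word_swap hw'
    have hlen : (p ++ [c]).length = p.length + 1 := by simp
    rw [hlen] at f1 f2 f3 f4
    refine ⟨sgen (p.length + 1 + 1) * x, Wset_mul (Wset_sgen (by omega) (by omega)) hx,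
      by simpa using f4, ?_⟩
    rw [knuthStep_iff hx]
    have g : ((p.length + 1 : ℕ) : ℤ) = ((p.length + 1 + 1 : ℕ) : ℤ) - 1 := by
      push_cast; ring
    rw [g] at e2
    exact ⟨_, by omega, by omega, rfl, by omega, Or.inr (Or.inr ⟨by omega, by omega, by omega⟩)⟩

theorem step_mem {n : ℕ} {x y : P} (hx : x ∈ Wset n) (h : knuthStep n x y) : y ∈ Wset n := by
  obtain ⟨i, ⟨h1, h2⟩, rfl, _⟩ := h
  exact Wset_mul (Wset_sgen h1 (by omega)) hx

theorem step_mem' {n : ℕ} {x y : P} (hy : y ∈ Wset n) (h : knuthStep n x y) : x ∈ Wset n := by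
  obtain ⟨i, ⟨h1, h2⟩, rfl, _⟩ := h
  have := Wset_mul (Wset_sgen h1 (n := n) (by omega)) hy
  rwa [sgen_mul_mul i h1] at this

theorem KS_word' {n : ℕ} {x : P} (hx : x ∈ Wset n) {L : List ℤ} (h : KS L (word n x)) :
    ∃ y ∈ Wset n, word n y = L ∧ knuthStep n y x := by
  suffices ∃ y ∈ Wset n, word n y = L by
    obtain ⟨y, hy, rfl⟩ := this
    obtain ⟨z, hz, hzw, hs⟩ := KS_word hy h
    rw [word_inj hz hx hzw] at hs
    exact ⟨y, hy, rfl, hs⟩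
  generalize hw : word n x = w at h
  cases h with
  | opp p s a b h1 h2 =>
    obtain ⟨e1, e2, e3, e4⟩ := word_swap hw
    exact ⟨_, Wset_mul (Wset_sgen (by omega) (by omega)) hx, e4⟩
  | k1 p s a c b h1 h2 =>
    obtain ⟨e1, e2, e3, e4⟩ := word_swap hw
    exact ⟨_, Wset_mul (Wset_sgen (by omega) (by omega)) hx, e4⟩
  | k2 p s a c b h1 h2 =>
    have hw' : word n x = (p ++ [c]) ++ b :: a :: s := by simpa using hw
    obtain ⟨f1, f2, f3, f4⟩ := word_swap hw'
    exact ⟨sgen ((p ++ [c]).length + 1) * x, Wset_mul (Wset_sgen (by omega) (by omega)) hx,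
      by rw [f4]; simp⟩

theorem step_KS {n : ℕ} {x y : P} (hx : x ∈ Wset n) (h : knuthStep n x y) :
    KS (word n x) (word n y) := by
  rw [knuthStep_iff hx] at h
  obtain ⟨i, hi, hin, rfl, hlt, hc⟩ := h
  obtain ⟨m, hm⟩ := Nat.exists_eq_add_of_le hin
  rw [word_split n i m hi hm.symm, word_sgen n i m hi hm.symm]
  rcases hc with ⟨h1, h2⟩ | ⟨h1, h2, h3⟩ | ⟨h1, h2, h3⟩
  · exact KS.opp _ _ _ _ h1 h2
  · obtain ⟨m', rfl⟩ : ∃ m', m = m' + 1 := ⟨m - 1, by omega⟩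
    rw [List.range'_succ, List.map_cons]
    push_cast
    exact KS.k1 _ _ _ _ _ h2 h3
  · obtain ⟨j, rfl⟩ : ∃ j, i = j + 2 := ⟨i - 2, by omega⟩
    have e : j + 2 - 1 = j + 1 := by omega
    have e2 : (((j + 2 : ℕ) : ℤ) - 1) = ((1 + j : ℕ) : ℤ) := by push_cast; ring
    rw [e2] at h2 h3
    rw [e, List.range'_1_concat, List.map_append, List.append_assoc, List.append_assoc]
    exact KS.k2 _ _ _ _ _ h2 h3

theorem knuthRel_iff {n : ℕ} {x y : P} (hx : x ∈ Wset n) (hy : y ∈ Wset n) :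
    knuthRel n x y ↔ KSE (word n x) (word n y) := by
  constructor
  · intro h
    have : y ∈ Wset n ∧ KSE (word n x) (word n y) := by
      clear hy
      induction h with
      | refl => exact ⟨hx, .refl _⟩
      | tail _ h ih =>
        obtain ⟨hb, ih⟩ := ih
        rcases h with h | h
        · exact ⟨step_mem hb h, .trans _ _ _ ih (.rel _ _ (step_KS hb h))⟩
        · have hc := step_mem' hb h
          exact ⟨hc, .trans _ _ _ ih (.symm _ _ (.rel _ _ (step_KS hc h)))⟩
    exact this.2
  · intro h
    have key : ∀ L M : List ℤ, KSE L M →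
        (∀ x ∈ Wset n, word n x = L → ∃ y ∈ Wset n, word n y = M ∧ knuthRel n x y) ∧
        (∀ x ∈ Wset n, word n x = M → ∃ y ∈ Wset n, word n y = L ∧ knuthRel n x y) := by
      intro L M h
      induction h with
      | rel _ _ h =>
        constructor
        · rintro x hx rfl
          obtain ⟨y, hy, hw, hs⟩ := KS_word hx h
          exact ⟨y, hy, hw, .single (Or.inl hs)⟩
        · rintro x hx rfl
          obtain ⟨y, hy, hw, hs⟩ := KS_word' hx h
          exact ⟨y, hy, hw, .single (Or.inr hs)⟩
      | refl => exact ⟨fun x hx hw => ⟨x, hx, hw, .refl⟩, fun x hx hw => ⟨x, hx, hw, .refl⟩⟩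
      | symm _ _ _ ih => exact ⟨ih.2, ih.1⟩
      | trans _ _ _ _ _ h1 h2 =>
        constructor
        · intro x hx hw
          obtain ⟨y, hy, hyw, hs⟩ := h1.1 x hx hw
          obtain ⟨z, hz, hzw, hs'⟩ := h2.1 y hy hyw
          exact ⟨z, hz, hzw, Relation.ReflTransGen.trans hs hs'⟩
        · intro x hx hw
          obtain ⟨y, hy, hyw, hs⟩ := h2.2 x hx hw
          obtain ⟨z, hz, hzw, hs'⟩ := h1.2 y hy hyw
          exact ⟨z, hz, hzw, Relation.ReflTransGen.trans hs hs'⟩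
    obtain ⟨z, hz, hzw, hs⟩ := (key _ _ h).1 x hx rfl
    rwa [word_inj hz hy hzw] at hs

/-! ### The recording bitableau -/

/-- (label, value) pairs of positive sign -/
noncomputable def plP (x : P) (l : List ℕ) : List (ℕ × ℕ) :=
  l.filterMap (fun i : ℕ => if 0 < x (i : ℤ) then some (i, (x (i : ℤ)).natAbs) else none)

/-- (label, value) pairs of negative sign -/
noncomputable def plN (x : P) (l : List ℕ) : List (ℕ × ℕ) :=
  l.filterMap (fun i : ℕ => if 0 < x (i : ℤ) then none else some (i, (x (i : ℤ)).natAbs))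

theorem foldl_RS (x : P) (l : List ℕ) (st : (Tab × Tab) × (Tab × Tab)) :
    (l.foldl (RSstep x) st).2 = (((plP x l).foldl rsStep (st.1.1, st.2.1)).2,
      ((plN x l).foldl rsStep (st.1.2, st.2.2)).2) := by
  induction l generalizing st with
  | nil => rfl
  | cons i l ih =>
    rw [List.foldl_cons, ih]
    by_cases h : 0 < x (i : ℤ)
    · have e1 : plP x (i :: l) = (i, (x (i : ℤ)).natAbs) :: plP x l := by simp [plP, h]
      have e2 : plN x (i :: l) = plN x l := by simp [plN, h]
      rw [e1, e2]
      simp [RSstep, h, rsStep]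
    · have e1 : plN x (i :: l) = (i, (x (i : ℤ)).natAbs) :: plN x l := by simp [plN, h]
      have e2 : plP x (i :: l) = plP x l := by simp [plP, h]
      rw [e1, e2]
      simp [RSstep, h, rsStep]

theorem Btab_eq (n : ℕ) (x : P) : Btab n x =
    ((rs (plP x (List.range' 1 n))).2, (rs (plN x (List.range' 1 n))).2) := by
  have e : (List.range n).map (· + 1) = List.range' 1 n := by
    rw [List.range'_eq_map_range]
    exact List.map_congr_left (fun a _ => by omega)
  unfold Btab RSfull
  rw [e, foldl_RS]
  rfl

theorem rs_sym (Q : List (ℕ × ℕ)) (hQ : Q.Pairwise (fun p q => p.1 < q.1)) (n : ℕ)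
    (g : ℕ → Option ℕ) (hg : ∀ m, 1 ≤ m → m ≤ n → ∀ i, g m = some i ↔ (i, m) ∈ Q)
    (hb : ∀ p ∈ Q, 1 ≤ p.2) (k : ℕ) (hk : k ≤ n) :
    (rs (Q.filter (fun p => p.2 ≤ k))).2 = insWord [] ((List.range' 1 k).filterMap g) := by
  induction k with
  | zero =>
    have : Q.filter (fun p => p.2 ≤ 0) = [] := by
      rw [List.filter_eq_nil_iff]
      intro p hp
      have := hb p hp
      simp; omega
    rw [this]; rfl
  | succ k ih =>
    have ih := ih (by omega)
    rw [List.range'_1_concat, List.filterMap_append]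
    have same : ∀ R : List (ℕ × ℕ), (∀ p ∈ R, p.2 ≠ k + 1) →
        R.filter (fun p => p.2 ≤ k + 1) = R.filter (fun p => p.2 ≤ k) := by
      intro R hR
      apply List.filter_congr
      intro p hp
      have := hR p hp
      simp; omega
    have g1 := hg (k + 1) (by omega) hk
    rw [add_comm 1 k]
    cases h : g (k + 1) with
    | none =>
      rw [same Q, ih]
      · simp [h]
      · rintro ⟨i, m⟩ hp rfl
        rw [(g1 i).2 hp] at h
        cases h
    | some i =>
      obtain ⟨q1, q2, rfl⟩ := List.append_of_mem ((g1 i).1 h)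
      have hne : ∀ p ∈ q1 ++ q2, p.2 ≠ k + 1 := by
        rintro ⟨j, m⟩ hp rfl
        have hp' : (j, k + 1) ∈ q1 ++ (i, k + 1) :: q2 := by
          simp only [List.mem_append, List.mem_cons] at hp ⊢; tauto
        have hj := (g1 j).2 hp'
        rw [h] at hj
        obtain rfl : i = j := by simpa using hj
        rw [List.pairwise_append, List.pairwise_cons] at hQ
        rcases List.mem_append.1 hp with hp | hp
        · exact absurd (hQ.2.2 _ hp (i, k + 1) (by simp)) (lt_irrefl _)
        · exact absurd (hQ.2.1.1 _ hp) (lt_irrefl _)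
      have hle : ¬ (k + 1 ≤ k) := by omega
      have e0 : (q1 ++ (i, k + 1) :: q2).filter (fun p => p.2 ≤ k) =
          q1.filter (fun p => p.2 ≤ k) ++ q2.filter (fun p => p.2 ≤ k) := by
        rw [List.filter_append, List.filter_cons]
        simp
      have e1 : (q1 ++ (i, k + 1) :: q2).filter (fun p => p.2 ≤ k + 1) =
          q1.filter (fun p => p.2 ≤ k) ++ (i, k + 1) :: q2.filter (fun p => p.2 ≤ k) := by
        rw [List.filter_append, List.filter_cons, same q1 (fun p hp => hne p (by simp [hp])),
          same q2 (fun p hp => hne p (by simp [hp]))]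
        simp
      rw [e0] at ih
      rw [e1, rs_insert, ih]
      · simp [h, insWord]
      · intro p hp
        rw [← List.filter_append] at hp
        have := (List.mem_filter.1 hp).2
        simp at this; omega
      · rw [← e1]
        exact hQ.filter _

theorem plP_mem (x : P) (l : List ℕ) (i m : ℕ) : (i, m) ∈ plP x l ↔
    i ∈ l ∧ 0 < x (i : ℤ) ∧ (x (i : ℤ)).natAbs = m := by
  simp only [plP, List.mem_filterMap]
  constructor
  · rintro ⟨j, hj, h⟩
    split_ifs at h with hp
    simp only [Option.some.injEq, Prod.mk.injEq] at h
    obtain ⟨rfl, h⟩ := h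
    exact ⟨hj, hp, h⟩
  · rintro ⟨h1, h2, h3⟩
    exact ⟨i, h1, by simp [h2, h3]⟩

theorem plN_mem (x : P) (l : List ℕ) (i m : ℕ) : (i, m) ∈ plN x l ↔
    i ∈ l ∧ ¬ 0 < x (i : ℤ) ∧ (x (i : ℤ)).natAbs = m := by
  simp only [plN, List.mem_filterMap]
  constructor
  · rintro ⟨j, hj, h⟩
    split_ifs at h with hp
    simp only [Option.some.injEq, Prod.mk.injEq] at h
    obtain ⟨rfl, h⟩ := h
    exact ⟨hj, hp, h⟩
  · rintro ⟨h1, h2, h3⟩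
    exact ⟨i, h1, by simp [h2, h3]⟩

theorem plP_pw (x : P) (n : ℕ) :
    (plP x (List.range' 1 n)).Pairwise (fun p q => p.1 < q.1) := by
  unfold plP
  rw [List.pairwise_filterMap]
  refine List.Pairwise.imp ?_ List.pairwise_lt_range'
  intro a b hab c hc d hd
  split_ifs at hc hd
  simp only [Option.some.injEq] at hc hd
  subst hc hd; exact hab

theorem plN_pw (x : P) (n : ℕ) :
    (plN x (List.range' 1 n)).Pairwise (fun p q => p.1 < q.1) := by
  unfold plN
  rw [List.pairwise_filterMap]
  refine List.Pairwise.imp ?_ List.pairwise_lt_range'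
  intro a b hab c hc d hd
  split_ifs at hc hd
  simp only [Option.some.injEq] at hc hd
  subst hc hd; exact hab

theorem Btab_word {n : ℕ} {x : P} (hx : x ∈ Wset n) : Btab n x =
    (insWord [] (posP (word n x)), insWord [] (negP (word n x))) := by
  have hne : ∀ i ∈ List.range' 1 n, x (i : ℤ) ≠ 0 := by
    intro i hi
    rw [List.mem_range'_1] at hi
    exact Wset_ne hx (by omega)
  have hbd : ∀ i ∈ List.range' 1 n, (x (i : ℤ)).natAbs ≤ n := by
    intro i hi
    rw [List.mem_range'_1] at hi
    have := Wset_bound hx (a := i) (by rw [Nat.abs_cast]; omega)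
    rw [Int.abs_eq_natAbs] at this
    omega
  have hbd' : ∀ m : ℕ, m ≤ n → (x⁻¹ (m : ℤ)).natAbs ≤ n := by
    intro m hm
    have := Wset_bound (Wset_inv hx) (a := m) (by rw [Nat.abs_cast]; omega)
    rw [Int.abs_eq_natAbs] at this
    omega
  rw [Btab_eq]
  congr 1
  · have := rs_sym (plP x (List.range' 1 n)) (plP_pw x n) n
      (fun m : ℕ => if 0 < x⁻¹ (m : ℤ) then some (x⁻¹ (m : ℤ)).natAbs else none) ?_ ?_ n le_rfl
    · rw [List.filter_eq_self.2] at this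
      · rw [this, posP, word, List.filterMap_map]; rfl
      · rintro ⟨i, m⟩ hp
        rw [plP_mem] at hp
        have := hbd i hp.1
        simp; omega
    · intro m h1 h2 i
      have hb := hbd' m h2
      rw [plP_mem, List.mem_range'_1]
      constructor
      · intro h
        split_ifs at h with hp
        simp only [Option.some.injEq] at h
        have e : x⁻¹ (m : ℤ) = i := by omega
        have e2 : x (i : ℤ) = m := by rw [← e]; simp
        rw [e2]
        omega
      · rintro ⟨h3, h4, h5⟩
        have e2 : x (i : ℤ) = m := by omega
        have e : x⁻¹ (m : ℤ) = i := by rw [← e2]; simp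
        rw [e, if_pos (by omega)]
        simp
    · rintro ⟨i, m⟩ hp
      rw [plP_mem] at hp
      have := hne i hp.1
      simp only; omega
  · have := rs_sym (plN x (List.range' 1 n)) (plN_pw x n) n
      (fun m : ℕ => if x⁻¹ (m : ℤ) < 0 then some (x⁻¹ (m : ℤ)).natAbs else none) ?_ ?_ n le_rfl
    · rw [List.filter_eq_self.2] at this
      · rw [this, negP, word, List.filterMap_map]; rfl
      · rintro ⟨i, m⟩ hp
        rw [plN_mem] at hp
        have := hbd i hp.1
        simp; omega
    · intro m h1 h2 i
      have hb := hbd' m h2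
      rw [plN_mem, List.mem_range'_1]
      constructor
      · intro h
        split_ifs at h with hp
        simp only [Option.some.injEq] at h
        have e : x⁻¹ (m : ℤ) = -i := by omega
        have e2 : x (-(i : ℤ)) = m := by rw [← e]; simp
        rw [hx.1] at e2
        omega
      · rintro ⟨h3, h4, h5⟩
        have e2 : x (-(i : ℤ)) = m := by rw [hx.1]; omega
        have e : x⁻¹ (m : ℤ) = -i := by rw [← e2]; simp
        rw [e, if_pos (by omega)]
        simp
    · rintro ⟨i, m⟩ hp
      rw [plN_mem] at hp
      have := hne i hp.1
      simp only; omega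

end RSK

/-- For `x, y ∈ W_n`: `B_n(x) = B_n(y)` iff `x ↔_L y`. -/
theorem RS_cell_iff_knuth (n : ℕ) (hn : 1 ≤ n) (x y : P)
    (hx : x ∈ Wset n) (hy : y ∈ Wset n) :
    Btab n x = Btab n y ↔ knuthRel n x y := by
  rw [RSK.knuthRel_iff hx hy, RSK.KSE_iff (RSK.word_ne n hx) (RSK.word_ne n hy)
    (RSK.word_nodup n x), RSK.Btab_word hx, RSK.Btab_word hy, Prod.mk.injEq]
end

section
/- Let 1 ≤ l ≤ n−1, let a ∈ X_n^{(l)} and let s ∈ Σ_n = {s_1,…,s_{n−1}}. Then a^{−1} s a ≠ s_l. -/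
open scoped Classical

/-- the index set `I_n` -/
noncomputable def II (n : ℕ) : Finset ℤ := (Finset.Icc (-(n:ℤ)) n).erase 0

/-- type `A` inversions of `w` on `F` -/
noncomputable def invs (F : Finset ℤ) (w : P) : Finset (ℤ × ℤ) :=
  (F ×ˢ F).filter (fun x => x.1 < x.2 ∧ w x.2 < w x.1)

/-- positions of negative entries -/
noncomputable def negs (n : ℕ) (w : P) : Finset ℤ := (Finset.Icc (1:ℤ) n).filter (fun x => w x < 0)

/-- twice the length -/
noncomputable def MM (n : ℕ) (w : P) : ℕ := (invs (II n) w).card + (negs n w).card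

lemma mem_II (n : ℕ) (x : ℤ) : x ∈ II n ↔ x ≠ 0 ∧ -(n:ℤ) ≤ x ∧ x ≤ n := by
  simp [II]

lemma mem_negs (n : ℕ) (w : P) (x : ℤ) : x ∈ negs n w ↔ (1 ≤ x ∧ x ≤ n) ∧ w x < 0 := by
  simp [negs]

lemma mem_invs (F : Finset ℤ) (w : P) (x y : ℤ) : (x, y) ∈ invs F w ↔
    (x ∈ F ∧ y ∈ F) ∧ x < y ∧ w y < w x := by
  rw [invs, Finset.mem_filter, Finset.mem_product]

lemma sgen_apply (k : ℕ) (hk : 1 ≤ k) (x : ℤ) : sgen k x =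
    if x = k then (k:ℤ) + 1 else if x = (k:ℤ) + 1 then (k:ℤ) else
    if x = -(k:ℤ) then -((k:ℤ) + 1) else if x = -((k:ℤ) + 1) then -(k:ℤ) else x := by
  simp only [sgen, Equiv.Perm.mul_apply, Equiv.swap_apply_def]
  split_ifs <;> omega

lemma tgen_apply (x : ℤ) : tgen x = if x = 1 then -1 else if x = -1 then 1 else x := by
  simp only [tgen, Equiv.swap_apply_def]

lemma sgen_sq (k : ℕ) (hk : 1 ≤ k) : sgen k * sgen k = 1 := by
  ext x
  simp only [Equiv.Perm.mul_apply, sgen_apply k hk, Equiv.Perm.one_apply]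
  split_ifs <;> omega

lemma tgen_sq : tgen * tgen = 1 := by
  rw [tgen, Equiv.swap_mul_self]

lemma sgen_ne_tgen (k : ℕ) (hk : 1 ≤ k) : sgen k ≠ tgen := by
  intro h
  have := congrArg (fun f : P => f (k:ℤ)) h
  simp only [sgen_apply k hk, tgen_apply] at this
  split_ifs at this <;> omega

lemma sgen_mem (n k : ℕ) (hk : 1 ≤ k) (hk' : k ≤ n - 1) : sgen k ∈ Wset n := by
  constructor
  · intro i
    simp only [sgen_apply k hk]
    split_ifs <;> omega
  · intro i hi
    have : (n:ℤ) < i ∨ (n:ℤ) < -i := lt_abs.mp hi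
    simp only [sgen_apply k hk]
    split_ifs <;> omega

lemma tgen_mem (n : ℕ) (hn : 1 ≤ n) : tgen ∈ Wset n := by
  constructor
  · intro i
    simp only [tgen_apply]
    split_ifs <;> omega
  · intro i hi
    have : (n:ℤ) < i ∨ (n:ℤ) < -i := lt_abs.mp hi
    simp only [tgen_apply]
    split_ifs <;> omega

lemma W_mul {n : ℕ} {u v : P} (hu : u ∈ Wset n) (hv : v ∈ Wset n) : u * v ∈ Wset n := by
  constructor
  · intro i
    simp only [Equiv.Perm.mul_apply, hv.1, hu.1]
  · intro i hi
    simp only [Equiv.Perm.mul_apply]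
    rw [hv.2 i hi, hu.2 i hi]

lemma W_zero {n : ℕ} {u : P} (hu : u ∈ Wset n) : u 0 = 0 := by
  have := hu.1 0
  simp only [neg_zero] at this
  omega

lemma W_ne {n : ℕ} {u : P} (hu : u ∈ Wset n) {x : ℤ} (hx : x ≠ 0) : u x ≠ 0 := by
  intro h
  exact hx (u.injective (h.trans (W_zero hu).symm))

lemma invs_swap (F : Finset ℤ) (w : P) (p q : ℤ) (hp : p ∈ F) (hq : q ∈ F) (hpq : p < q)
    (hadj : ∀ x ∈ F, x ≤ p ∨ q ≤ x) (hw : w p < w q) :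
    (invs F (w * Equiv.swap p q)).card = (invs F w).card + 1 := by
  have hmem : (p, q) ∈ invs F (w * Equiv.swap p q) := by
    rw [mem_invs]
    simp [hp, hq, hpq, hw]
  have hF : ∀ x ∈ F, Equiv.swap p q x ∈ F := by
    intro x hx
    rw [Equiv.swap_apply_def]
    split_ifs <;> assumption
  have hlt : ∀ x ∈ F, ∀ y ∈ F, x < y → (x = p ∧ y = q) ∨
      Equiv.swap p q x < Equiv.swap p q y := by
    intro x hx y hy hxy
    have h1 := hadj x hx
    have h2 := hadj y hy
    simp only [Equiv.swap_apply_def]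
    split_ifs <;> omega
  rw [← Finset.card_erase_add_one hmem]
  congr 1
  apply Finset.card_nbij' (fun x => (Equiv.swap p q x.1, Equiv.swap p q x.2))
    (fun x => (Equiv.swap p q x.1, Equiv.swap p q x.2))
  · rintro ⟨x, y⟩ hx
    rw [Finset.mem_coe, Finset.mem_erase, mem_invs] at hx
    rw [Finset.mem_coe, mem_invs]
    simp only [ne_eq, Prod.mk.injEq, Equiv.Perm.mul_apply] at hx
    obtain ⟨h5, ⟨h1, h2⟩, h3, h4⟩ := hx
    exact ⟨⟨hF _ h1, hF _ h2⟩, (hlt x h1 y h2 h3).resolve_left h5, h4⟩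
  · rintro ⟨x, y⟩ hx
    rw [Finset.mem_coe, mem_invs] at hx
    rw [Finset.mem_coe, Finset.mem_erase, mem_invs]
    simp only [ne_eq, Prod.mk.injEq, Equiv.Perm.mul_apply]
    obtain ⟨⟨h1, h2⟩, h3, h4⟩ := hx
    refine ⟨?_, ⟨hF _ h1, hF _ h2⟩, (hlt x h1 y h2 h3).resolve_left ?_, ?_⟩
    rotate_left
    · rintro ⟨rfl, rfl⟩
      omega
    · simpa using h4
    · rintro ⟨h5, h6⟩
      have h5' : x = q := by
        have := congrArg (Equiv.swap p q) h5
        simpa using this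
      have h6' : y = p := by
        have := congrArg (Equiv.swap p q) h6
        simpa using this
      omega
  · rintro ⟨x, y⟩ _
    simp
  · rintro ⟨x, y⟩ _
    simp

lemma invs_sgen (n k : ℕ) (hk : 1 ≤ k) (hk' : k ≤ n - 1) (w : P) (hW : w ∈ Wset n)
    (hw : w k < w ((k:ℤ) + 1)) :
    (invs (II n) (w * sgen k)).card = (invs (II n) w).card + 2 := by
  have e : w * sgen k = (w * Equiv.swap (k:ℤ) (k+1)) * Equiv.swap (-((k:ℤ)+1)) (-(k:ℤ)) := by
    rw [sgen, mul_assoc, Equiv.swap_comm (-(k:ℤ))]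
  rw [e, invs_swap, invs_swap]
  · rw [mem_II]; omega
  · rw [mem_II]; omega
  · omega
  · intro x _; omega
  · exact hw
  · rw [mem_II]; omega
  · rw [mem_II]; omega
  · omega
  · intro x _; omega
  · simp only [Equiv.Perm.mul_apply]
    rw [Equiv.swap_apply_of_ne_of_ne (by omega) (by omega),
      Equiv.swap_apply_of_ne_of_ne (by omega) (by omega), hW.1, hW.1]
    omega

lemma negs_sgen (n k : ℕ) (hk : 1 ≤ k) (hk' : k ≤ n - 1) (w : P) :
    (negs n (w * sgen k)).card = (negs n w).card := by
  have hinv : ∀ x, sgen k (sgen k x) = x := fun x => by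
    rw [← Equiv.Perm.mul_apply, sgen_sq k hk, Equiv.Perm.one_apply]
  have hr : ∀ x : ℤ, 1 ≤ x ∧ x ≤ n → 1 ≤ sgen k x ∧ sgen k x ≤ n := by
    intro x hx
    rw [sgen_apply k hk]
    split_ifs <;> omega
  apply Finset.card_nbij' (sgen k) (sgen k)
  · intro x hx
    rw [Finset.mem_coe, mem_negs] at hx ⊢
    exact ⟨hr x hx.1, hx.2⟩
  · intro x hx
    rw [Finset.mem_coe, mem_negs] at hx ⊢
    refine ⟨hr x hx.1, ?_⟩
    rw [Equiv.Perm.mul_apply, hinv]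
    exact hx.2
  · intro x _; exact hinv x
  · intro x _; exact hinv x

lemma MM_sgen (n k : ℕ) (hk : 1 ≤ k) (hk' : k ≤ n - 1) (w : P) (hW : w ∈ Wset n)
    (hw : w k < w ((k:ℤ) + 1)) : MM n (w * sgen k) = MM n w + 2 := by
  rw [MM, MM, invs_sgen n k hk hk' w hW hw, negs_sgen n k hk hk' w]
  omega

lemma MM_sgen' (n k : ℕ) (hk : 1 ≤ k) (hk' : k ≤ n - 1) (w : P) (hW : w ∈ Wset n)
    (hw : w ((k:ℤ) + 1) < w k) : MM n (w * sgen k) + 2 = MM n w := by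
  have h := MM_sgen n k hk hk' (w * sgen k) (W_mul hW (sgen_mem n k hk hk')) (by
    simp only [Equiv.Perm.mul_apply, sgen_apply k hk]
    simpa using hw)
  rw [mul_assoc, sgen_sq k hk, mul_one] at h
  exact h.symm

lemma negs_tgen (n : ℕ) (hn : 1 ≤ n) (w : P) (hW : w ∈ Wset n) (hw : 0 < w 1) :
    (negs n (w * tgen)).card = (negs n w).card + 1 := by
  have h1 : (1:ℤ) ∉ negs n w := by
    rw [mem_negs]; omega
  rw [← Finset.card_insert_of_notMem h1]
  congr 1
  ext x
  rw [Finset.mem_insert, mem_negs, mem_negs, Equiv.Perm.mul_apply, tgen_apply]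
  by_cases hx : x = 1
  · subst hx
    have := hW.1 1
    simp
    omega
  · by_cases hx' : x = -1
    · subst hx'; simp
    · simp [hx, hx']

lemma MM_tgen (n : ℕ) (hn : 1 ≤ n) (w : P) (hW : w ∈ Wset n) (hw : 0 < w 1) :
    MM n (w * tgen) = MM n w + 2 := by
  rw [MM, MM, negs_tgen n hn w hW hw]
  have := invs_swap (II n) w (-1) 1 (by rw [mem_II]; omega) (by rw [mem_II]; omega) (by omega)
    (by intro x hx; rw [mem_II] at hx; omega) (by rw [hW.1]; omega)
  rw [tgen, Equiv.swap_comm, this]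
  omega

lemma MM_tgen' (n : ℕ) (hn : 1 ≤ n) (w : P) (hW : w ∈ Wset n) (hw : w 1 < 0) :
    MM n (w * tgen) + 2 = MM n w := by
  have h := MM_tgen n hn (w * tgen) (W_mul hW (tgen_mem n hn)) (by
    have := hW.1 1
    simp only [Equiv.Perm.mul_apply, tgen_apply]
    simp
    omega)
  rw [mul_assoc, tgen_sq, mul_one] at h
  exact h.symm

lemma MM_one (n : ℕ) : MM n 1 = 0 ∧ (negs n 1).card = 0 := by
  have h1 : invs (II n) 1 = ∅ := by
    ext ⟨x, y⟩
    simp only [mem_invs, Equiv.Perm.one_apply, Finset.notMem_empty, iff_false]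
    omega
  have h2 : negs n 1 = ∅ := by
    ext x
    simp only [mem_negs, Equiv.Perm.one_apply, Finset.notMem_empty, iff_false]
    omega
  simp [MM, h1, h2]

/-- effect of a generator -/
lemma step (n : ℕ) (hn : 1 ≤ n) (w g : P) (hW : w ∈ Wset n) (hg : g ∈ Sset n) :
    w * g ∈ Wset n ∧ MM n (w * g) ≤ MM n w + 2 ∧ (MM n (w * g) = MM n w + 2 →
      (negs n (w * g)).card = (negs n w).card + if g = tgen then 1 else 0) := by
  rcases hg with rfl | ⟨k, ⟨hk, hk'⟩, rfl⟩
  · refine ⟨W_mul hW (tgen_mem n hn), ?_⟩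
    rcases lt_or_gt_of_ne (W_ne hW one_ne_zero) with h | h
    · have := MM_tgen' n hn w hW h
      exact ⟨by omega, by omega⟩
    · have := MM_tgen n hn w hW h
      exact ⟨by omega, fun _ => by simpa using negs_tgen n hn w hW h⟩
  · refine ⟨W_mul hW (sgen_mem n k hk hk'), ?_⟩
    have hne : w k ≠ w ((k:ℤ)+1) := fun h => by
      have := w.injective h
      omega
    rw [if_neg (sgen_ne_tgen k hk)]
    rcases lt_or_gt_of_ne hne with h | h
    · have := MM_sgen n k hk hk' w hW h
      exact ⟨by omega, fun _ => negs_sgen n k hk hk' w⟩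
    · have := MM_sgen' n k hk hk' w hW h
      exact ⟨by omega, by omega⟩

lemma word (n : ℕ) (hn : 1 ≤ n) (l : List P) : (∀ g ∈ l, g ∈ Sset n) →
    l.prod ∈ Wset n ∧ MM n l.prod ≤ 2 * l.length ∧
      (MM n l.prod = 2 * l.length → (negs n l.prod).card = tcount l) := by
  induction l using List.reverseRecOn with
  | nil =>
    intro _
    refine ⟨⟨fun i => rfl, fun i _ => rfl⟩, ?_⟩
    have := MM_one n
    simp [tcount, this]
  | append_singleton l g ih =>
    intro h
    obtain ⟨h1, h2, h3⟩ := ih (fun x hx => h x (by simp [hx]))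
    obtain ⟨s1, s2, s3⟩ := step n hn l.prod g h1 (h g (by simp))
    have e : (l ++ [g]).prod = l.prod * g := by simp
    have e2 : tcount (l ++ [g]) = tcount l + if g = tgen then 1 else 0 := by
      simp [tcount]
    rw [e, e2, List.length_append, List.length_singleton]
    refine ⟨s1, by omega, fun h4 => ?_⟩
    rw [s3 (by omega), h3 (by omega)]

lemma eq_one (n : ℕ) (w : P) (hW : w ∈ Wset n) (h1 : 0 < w 1)
    (hs : ∀ k : ℕ, 1 ≤ k → k ≤ n - 1 → w k < w ((k:ℤ) + 1)) : w = 1 := by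
  have hge : ∀ k : ℕ, (k:ℤ) ≤ w k := by
    intro k
    induction k with
    | zero => simp [W_zero hW]
    | succ k ih =>
      by_cases hk : k = 0
      · subst hk; simp; omega
      · by_cases hk' : k ≤ n - 1
        · have := hs k (by omega) hk'
          push_cast; omega
        · rw [hW.2 _ (by rw [lt_abs]; push_cast; omega)]
  have heq : ∀ k : ℕ, w k = k := by
    intro k
    induction k using Nat.strong_induction_on with
    | _ k ih =>
      obtain ⟨m, hm⟩ := w.surjective (k:ℤ)
      rcases Int.eq_nat_or_neg m with ⟨j, rfl | rfl⟩
      · have := hge j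
        by_cases hj : j < k
        · have := ih j hj
          omega
        · have : j = k := by omega
          rw [this] at hm; exact hm
      · have := hge j
        rw [hW.1] at hm
        have hk : k = 0 := by omega
        subst hk
        simpa using W_zero hW
  ext x
  rcases Int.eq_nat_or_neg x with ⟨j, rfl | rfl⟩
  · simpa using heq j
  · rw [hW.1, heq j]; rfl

lemma exists_word (n : ℕ) (hn : 1 ≤ n) : ∀ (m : ℕ) (w : P), w ∈ Wset n → MM n w ≤ m →
    ∃ l : List P, (∀ g ∈ l, g ∈ Sset n) ∧ l.prod = w ∧ 2 * l.length = MM n w := by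
  intro m
  induction m using Nat.strong_induction_on with
  | _ m ih =>
    intro w hW hm
    have key : ∀ g ∈ Sset n, g * g = 1 → w * g ∈ Wset n → MM n (w * g) + 2 = MM n w →
        ∃ l : List P, (∀ g ∈ l, g ∈ Sset n) ∧ l.prod = w ∧ 2 * l.length = MM n w := by
      intro g hg hgg hwg hM
      obtain ⟨l, l1, l2, l3⟩ := ih (MM n (w * g)) (by omega) (w * g) hwg le_rfl
      refine ⟨l ++ [g], ?_, ?_, ?_⟩
      · intro x hx
        rcases List.mem_append.mp hx with h | h
        · exact l1 x h
        · rw [List.mem_singleton.mp h]; exact hg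
      · rw [List.prod_append, l2, List.prod_singleton, mul_assoc, hgg, mul_one]
      · rw [List.length_append, List.length_singleton]; omega
    by_cases h1 : w 1 < 0
    · exact key tgen (Or.inl rfl) tgen_sq (W_mul hW (tgen_mem n hn)) (MM_tgen' n hn w hW h1)
    · by_cases hs : ∃ k : ℕ, 1 ≤ k ∧ k ≤ n - 1 ∧ w ((k:ℤ) + 1) < w k
      · obtain ⟨k, hk, hk', h⟩ := hs
        exact key (sgen k) (Or.inr ⟨k, ⟨hk, hk'⟩, rfl⟩) (sgen_sq k hk)
          (W_mul hW (sgen_mem n k hk hk')) (MM_sgen' n k hk hk' w hW h)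
      · push Not at hs
        have hw1 : w = 1 := by
          apply eq_one n w hW
          · have := W_ne hW one_ne_zero
            omega
          · intro k hk hk'
            refine lt_of_le_of_ne (hs k hk hk') fun h => ?_
            have := w.injective h
            omega
        subst hw1
        exact ⟨[], by simp, rfl, by simp [(MM_one n).1]⟩

lemma len_eq (n : ℕ) (hn : 1 ≤ n) (w : P) (hW : w ∈ Wset n) : 2 * len n w = MM n w := by
  obtain ⟨l, l1, l2, l3⟩ := exists_word n hn _ w hW le_rfl
  have hle : len n w ≤ l.length := Nat.sInf_le ⟨l, l1, l2, rfl⟩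
  obtain ⟨l', a1, a2, a3⟩ := Nat.sInf_mem (s := {k | ∃ l : List P, (∀ g ∈ l, g ∈ Sset n) ∧
    l.prod = w ∧ l.length = k}) ⟨_, l, l1, l2, rfl⟩
  have a3' : l'.length = len n w := a3
  have := (word n hn l' a1).2.1
  rw [a2] at this
  omega

/-- For `1 ≤ l ≤ n-1`, `a ∈ X_n^{(l)}` and `s ∈ Σ_n = {s_1, …, s_{n-1}}`,
one has `a⁻¹ s a ≠ s_l`. -/
theorem conj_ne_sl (n l : ℕ) (hl1 : 1 ≤ l) (hl2 : l ≤ n - 1) (a : P) (ha : a ∈ Xl n l)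
    (i : ℕ) (hi : i ∈ Set.Icc 1 (n - 1)) :
    a⁻¹ * sgen i * a ≠ sgen l := by
  obtain ⟨⟨hW, hmin⟩, ht⟩ := ha
  have hn : 1 ≤ n := by omega
  have hneg : (negs n a).card = l := by
    have hne : {k | ∃ l : List P, (∀ g ∈ l, g ∈ Sset n) ∧ l.prod = a ∧
        l.length = len n a ∧ tcount l = k}.Nonempty := by
      apply Nat.nonempty_of_pos_sInf
      change 0 < tlen n a
      omega
    obtain ⟨L, b1, b2, b3, b4⟩ := Nat.sInf_mem hne
    have b4' : tcount L = tlen n a := b4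
    have := (word n hn L b1).2.2 (by rw [b2, b3, len_eq n hn a hW])
    rw [b2] at this
    omega
  have hinc : ∀ k : ℕ, 1 ≤ k → k ≤ n - 1 → a k < a ((k:ℤ) + 1) := by
    intro k hk hk'
    by_contra hcon
    have hne : a k ≠ a ((k:ℤ)+1) := fun h => by
      have := a.injective h
      omega
    have h1 := MM_sgen' n k hk hk' a hW (by omega)
    have h2 := hmin (sgen k) (Subgroup.subset_closure ⟨k, ⟨hk, hk'⟩, rfl⟩)
    have h3 := len_eq n hn a hW
    have h4 := len_eq n hn _ (W_mul hW (sgen_mem n k hk hk'))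
    omega
  have hmono : ∀ (d k : ℕ), 1 ≤ k → k + d ≤ n → a k ≤ a ((k + d : ℕ) : ℤ) := by
    intro d
    induction d with
    | zero => intro k _ _; simp
    | succ d ih =>
      intro k hk hkd
      have h1 := ih k hk (by omega)
      have h2 := hinc (k + d) (by omega) (by omega)
      have e : ((k + (d + 1) : ℕ) : ℤ) = ((k + d : ℕ) : ℤ) + 1 := by push_cast; ring
      rw [e]
      omega
  have hmono' : ∀ x y : ℤ, 1 ≤ x → x ≤ y → y ≤ n → a x ≤ a y := by
    intro x y hx hxy hy
    have := hmono (y - x).toNat x.toNat (by omega) (by omega)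
    rwa [show ((x.toNat : ℕ) : ℤ) = x by omega,
      show ((x.toNat + (y - x).toNat : ℕ) : ℤ) = y by omega] at this
  have hal : a l < 0 := by
    by_contra hcon
    have hsub : negs n a ⊆ Finset.Icc 1 ((l:ℤ) - 1) := by
      intro x hx
      rw [mem_negs] at hx
      rw [Finset.mem_Icc]
      refine ⟨hx.1.1, ?_⟩
      by_contra hx'
      have := hmono' l x (by omega) (by omega) hx.1.2
      omega
    have := Finset.card_le_card hsub
    rw [hneg, Int.card_Icc] at this
    omega
  have hal' : 0 < a ((l:ℤ) + 1) := by
    by_contra hcon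
    have h0 : a ((l:ℤ) + 1) ≠ 0 := W_ne hW (by omega)
    have hsub : Finset.Icc 1 ((l:ℤ) + 1) ⊆ negs n a := by
      intro x hx
      rw [Finset.mem_Icc] at hx
      rw [mem_negs]
      have := hmono' x (l + 1) (by omega) (by omega) (by omega)
      omega
    have := Finset.card_le_card hsub
    rw [hneg, Int.card_Icc] at this
    omega
  intro h
  have h' : sgen i * a = a * sgen l := by
    rw [← h]; group
  have h2 := congrArg (fun f : P => f (l:ℤ)) h'
  simp only [Equiv.Perm.mul_apply, sgen_apply l hl1, sgen_apply i hi.1, if_true] at h2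
  have hi1 := hi.1
  split_ifs at h2 <;> omega
end
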